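/- arXiv:2305.13350 — 5 statements merged into one kernel-verified Lean document; each statement's English description precedes it below -/
import Mathlib

section
/- For every real p and every real x, the derivative of Λ^e_p satisfies (d/dx) Λ^e_p(x) = -(p+1) Λ^o_{p+1}(x), and the derivative of Λ^o_p satisfies (d/dx) Λ^o_p(x) = Λ^e_{p+1}(x). -/
open MeasureTheory Filter Real

/-- The even kernel function `Λ^e_p(x)`. -/
noncomputable def LamE (p x : ℝ) : ℝ :=
  (1 / Real.sqrt (2 * Real.pi)) *
    ∑' n : ℕ, (-1 : ℝ) ^ n * (∏ k ∈ Finset.range n, (p + 2 * (k : ℝ) + 1)) * x ^ (2 * n) /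
      (Nat.factorial (2 * n) : ℝ)

/-- The odd kernel function `Λ^o_p(x)`. -/
noncomputable def LamO (p x : ℝ) : ℝ :=
  (1 / Real.sqrt (2 * Real.pi)) *
    ∑' n : ℕ, (-1 : ℝ) ^ n * (∏ k ∈ Finset.range n, (p + 2 * ((k : ℝ) + 1))) * x ^ (2 * n + 1) /
      (Nat.factorial (2 * n + 1) : ℝ)

/-!
With `S c d x = ∑' n, c n * x ^ (2 n + d) / (2 n + d)!` and
`c_q n = (-1) ^ n * q (q + 2) ⋯ (q + 2 n - 2)`, the functions `Λ^e_p` and `Λ^o_p` are `S c_{p+1} 0`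
and `S c_{p+2} 1`, up to the factor `1 / √(2π)`.
Termwise differentiation turns `S c (d + 1)` into `S c d`. For `d = 0` the constant term drops out,
which shifts the coefficients, and `c_q (n + 1) = -q * c_{q+2} n`.
Termwise differentiation is legitimate as soon as the series converges everywhere: by Bernoulli's
inequality `n * r ^ (n - 1) ≤ (r + 1) ^ n`, so the series at `r + 1` dominates the derivatives
at `r`.
-/

section TermwiseDerivative

lemma natCast_mul_pow_pred_le_add_one_pow {R : Type*} [CommSemiring R] [LinearOrder R]
    [IsOrderedRing R] [ExistsAddOfLE R] {r : R} (hr : 0 ≤ r) (n : ℕ) :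
    n * r ^ (n - 1) ≤ (r + 1) ^ n := by
  have bernoulli : r ^ n + n * r ^ (n - 1) * 1 ≤ (r + 1) ^ n :=
    pow_add_mul_le_add_pow hr (add_nonneg (mul_nonneg zero_le_two hr) zero_le_one) n
  rw [mul_one] at bernoulli
  exact (le_add_of_nonneg_left (pow_nonneg hr n)).trans bernoulli

variable {𝕜 ι : Type*} [RCLike 𝕜] {a : ι → 𝕜} {e : ι → ℕ}

lemma norm_natCast_mul_pow_pred_le (n : ℕ) {y : 𝕜} {r : ℝ} (hy : ‖y‖ ≤ r) :
    ‖(n * y ^ (n - 1) : 𝕜)‖ ≤ ‖((r + 1 : ℝ) : 𝕜) ^ n‖ := by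
  have hr : 0 ≤ r := (norm_nonneg y).trans hy
  calc ‖(n * y ^ (n - 1) : 𝕜)‖ = n * ‖y‖ ^ (n - 1) := by
        rw [norm_mul, norm_pow, RCLike.norm_natCast]
    _ ≤ n * r ^ (n - 1) := by gcongr
    _ ≤ (r + 1) ^ n := natCast_mul_pow_pred_le_add_one_pow hr n
    _ = ‖((r + 1 : ℝ) : 𝕜) ^ n‖ := by
        rw [norm_pow, RCLike.norm_of_nonneg (by positivity)]

lemma summable_mul_natCast_mul_pow_pred (ha : ∀ y, Summable fun i ↦ a i * y ^ e i) (x : 𝕜) :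
    Summable fun i ↦ a i * (e i * x ^ (e i - 1)) := by
  refine .of_norm_bounded (ha ((‖x‖ + 1 : ℝ) : 𝕜)).norm fun i ↦ ?_
  rw [norm_mul, norm_mul (a i)]
  gcongr
  exact norm_natCast_mul_pow_pred_le (e i) le_rfl

lemma hasDerivAt_tsum_mul_pow (ha : ∀ y, Summable fun i ↦ a i * y ^ e i) (x : 𝕜) :
    HasDerivAt (fun y ↦ ∑' i, a i * y ^ e i) (∑' i, a i * (e i * x ^ (e i - 1))) x := by
  have hx : x ∈ Metric.ball (0 : 𝕜) (‖x‖ + 1) := by simp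
  refine hasDerivAt_tsum_of_isPreconnected (ha ((‖x‖ + 1 + 1 : ℝ) : 𝕜)).norm Metric.isOpen_ball
    Metric.isPreconnected_ball (fun i y _ ↦ (hasDerivAt_pow (e i) y).const_mul (a i))
    (fun i y hy ↦ ?_) hx (ha x) hx
  rw [norm_mul, norm_mul (a i)]
  gcongr
  exact norm_natCast_mul_pow_pred_le (e i) (mem_ball_zero_iff.mp hy).le

end TermwiseDerivative

section StepTwoExpSeries

lemma div_factorial_succ_mul_natCast_succ {K : Type*} [Field K] [CharZero K] (b : K) (m : ℕ) :
    b / (m + 1).factorial * (m + 1 : ℕ) = b / m.factorial := by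
  have : ((m + 1 : ℕ) : K) ≠ 0 := Nat.cast_ne_zero.mpr m.succ_ne_zero
  rw [Nat.factorial_succ, Nat.cast_mul]
  field_simp

variable {𝕜 : Type*} [RCLike 𝕜]

/-- The exponential generating series `∑ c n * x ^ (2 n + d) / (2 n + d)!`, the common form of
`Λ^e_p` (`d = 0`) and `Λ^o_p` (`d = 1`). It has the junk value `0` where the series diverges. -/
noncomputable def stepTwoExpSeries (c : ℕ → 𝕜) (d : ℕ) (x : 𝕜) : 𝕜 :=
  ∑' n, c n / (2 * n + d).factorial * x ^ (2 * n + d)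

variable {c : ℕ → 𝕜} {d : ℕ}

lemma hasDerivAt_stepTwoExpSeries_succ
    (hc : ∀ y, Summable fun n ↦ c n / (2 * n + (d + 1)).factorial * y ^ (2 * n + (d + 1))) (x : 𝕜) :
    HasDerivAt (stepTwoExpSeries c (d + 1)) (stepTwoExpSeries c d x) x := by
  refine (hasDerivAt_tsum_mul_pow hc x).congr_deriv (tsum_congr fun n ↦ ?_)
  rw [← mul_assoc, ← add_assoc, div_factorial_succ_mul_natCast_succ, Nat.add_sub_cancel]

lemma hasDerivAt_stepTwoExpSeries_zero
    (hc : ∀ y, Summable fun n ↦ c n / (2 * n).factorial * y ^ (2 * n)) (x : 𝕜) :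
    HasDerivAt (stepTwoExpSeries c 0) (stepTwoExpSeries (fun n ↦ c (n + 1)) 1 x) x := by
  refine (hasDerivAt_tsum_mul_pow hc x).congr_deriv ?_
  rw [(summable_mul_natCast_mul_pow_pred hc x).tsum_eq_zero_add]
  simp only [mul_zero, Nat.cast_zero, zero_mul, zero_add, stepTwoExpSeries]
  refine tsum_congr fun n ↦ ?_
  rw [← mul_assoc, show 2 * (n + 1) = 2 * n + 1 + 1 by ring, div_factorial_succ_mul_natCast_succ,
    Nat.add_sub_cancel]

lemma stepTwoExpSeries_const_mul (b : 𝕜) (c : ℕ → 𝕜) (d : ℕ) (x : 𝕜) :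
    stepTwoExpSeries (fun n ↦ b * c n) d x = b * stepTwoExpSeries c d x := by
  simp only [stepTwoExpSeries, mul_div_assoc, mul_assoc, tsum_mul_left]

end StepTwoExpSeries

section AltRisingCoeff

/-- The alternating step-two rising factorial `(-1) ^ n * q (q + 2) ⋯ (q + 2 n - 2)`; the
coefficients of `Λ^e_p` and `Λ^o_p` are those with `q = p + 1` and `q = p + 2`. -/
def altRisingCoeff {R : Type*} [CommRing R] (q : R) (n : ℕ) : R :=
  (-1) ^ n * ∏ k ∈ Finset.range n, (q + 2 * k)

lemma altRisingCoeff_succ {R : Type*} [CommRing R] (q : R) (n : ℕ) :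
    altRisingCoeff q (n + 1) = -(q + 2 * n) * altRisingCoeff q n := by
  rw [altRisingCoeff, altRisingCoeff, Finset.prod_range_succ, pow_succ]
  ring

lemma altRisingCoeff_succ_left {R : Type*} [CommRing R] (q : R) (n : ℕ) :
    altRisingCoeff q (n + 1) = -q * altRisingCoeff (q + 2) n := by
  have shift (k : ℕ) : q + 2 * ((k + 1 : ℕ) : R) = q + 2 + 2 * k := by push_cast; ring
  simp only [altRisingCoeff, Finset.prod_range_succ', shift, pow_succ, Nat.cast_zero]
  ring

lemma altRisingCoeff_div_factorial_mul_pow_succ {K : Type*} [Field K] (q x : K) (d n : ℕ) :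
    altRisingCoeff q (n + 1) / (2 * (n + 1) + d).factorial * x ^ (2 * (n + 1) + d) =
      -(q + 2 * n) * x ^ 2 / ((2 * n + d + 2 : ℕ) * (2 * n + d + 1 : ℕ)) *
        (altRisingCoeff q n / (2 * n + d).factorial * x ^ (2 * n + d)) := by
  rw [altRisingCoeff_succ, show 2 * (n + 1) + d = 2 * n + d + 1 + 1 by ring, Nat.factorial_succ,
    Nat.factorial_succ, Nat.cast_mul, Nat.cast_mul, pow_succ, pow_succ]
  ring

variable {𝕜 : Type*} [RCLike 𝕜]

lemma norm_altRisingCoeff_ratio_le_half {q x : 𝕜} {n : ℕ} (hq : ‖q‖ ≤ n) (hx : 2 * ‖x‖ ^ 2 ≤ n)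
    (d : ℕ) : ‖-(q + 2 * n) * x ^ 2 / ((2 * n + d + 2 : ℕ) * (2 * n + d + 1 : ℕ))‖ ≤ 1 / 2 := by
  have hcoeff : ‖q + 2 * n‖ ≤ 3 * n :=
    calc ‖q + 2 * n‖ ≤ ‖q‖ + ‖(2 * n : 𝕜)‖ := norm_add_le _ _
      _ = ‖q‖ + 2 * n := by rw [norm_mul, RCLike.norm_ofNat, RCLike.norm_natCast]
      _ ≤ 3 * n := by linarith
  rw [norm_div, norm_mul, norm_mul, norm_neg, norm_pow, RCLike.norm_natCast, RCLike.norm_natCast,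
    div_le_iff₀ (by positivity)]
  calc ‖q + 2 * n‖ * ‖x‖ ^ 2 ≤ 3 * n * (n / 2) := by gcongr; linarith
    _ ≤ 1 / 2 * ((2 * n) * (2 * n)) := by nlinarith [sq_nonneg (n : ℝ)]
    _ ≤ 1 / 2 * ((2 * n + d + 2 : ℕ) * (2 * n + d + 1 : ℕ)) := by
        push_cast
        gcongr <;> linarith [d.cast_nonneg (α := ℝ)]

lemma summable_altRisingCoeff_div_factorial_mul_pow (q : 𝕜) (d : ℕ) (x : 𝕜) :
    Summable fun n ↦ altRisingCoeff q n / (2 * n + d).factorial * x ^ (2 * n + d) := by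
  refine summable_of_ratio_norm_eventually_le (r := 1 / 2) (by norm_num) ?_
  filter_upwards [eventually_ge_atTop ⌈‖q‖⌉₊, eventually_ge_atTop ⌈2 * ‖x‖ ^ 2⌉₊] with n hq hx
  rw [altRisingCoeff_div_factorial_mul_pow_succ, norm_mul]
  gcongr
  exact norm_altRisingCoeff_ratio_le_half (Nat.ceil_le.mp hq) (Nat.ceil_le.mp hx) d

lemma hasDerivAt_stepTwoExpSeries_altRisingCoeff_succ (q : 𝕜) (d : ℕ) (x : 𝕜) :
    HasDerivAt (stepTwoExpSeries (altRisingCoeff q) (d + 1))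
      (stepTwoExpSeries (altRisingCoeff q) d x) x :=
  hasDerivAt_stepTwoExpSeries_succ (summable_altRisingCoeff_div_factorial_mul_pow q (d + 1)) x

lemma hasDerivAt_stepTwoExpSeries_altRisingCoeff_zero (q x : 𝕜) :
    HasDerivAt (stepTwoExpSeries (altRisingCoeff q) 0)
      (-q * stepTwoExpSeries (altRisingCoeff (q + 2)) 1 x) x := by
  have h := hasDerivAt_stepTwoExpSeries_zero (summable_altRisingCoeff_div_factorial_mul_pow q 0) x
  simpa only [altRisingCoeff_succ_left, stepTwoExpSeries_const_mul] using h

end AltRisingCoeff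

section Kernels

lemma LamE_eq_stepTwoExpSeries (p : ℝ) :
    LamE p = fun x ↦ 1 / √(2 * π) * stepTwoExpSeries (altRisingCoeff (p + 1)) 0 x := by
  ext x
  simp only [LamE, stepTwoExpSeries, altRisingCoeff, add_zero, add_right_comm p, div_mul_eq_mul_div]

lemma LamO_eq_stepTwoExpSeries (p : ℝ) :
    LamO p = fun x ↦ 1 / √(2 * π) * stepTwoExpSeries (altRisingCoeff (p + 2)) 1 x := by
  have factor (k : ℕ) : p + 2 * ((k : ℝ) + 1) = p + 2 + 2 * k := by ring
  ext x
  simp only [LamO, stepTwoExpSeries, altRisingCoeff, factor, div_mul_eq_mul_div]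

lemma hasDerivAt_LamE (p x : ℝ) : HasDerivAt (LamE p) (-(p + 1) * LamO (p + 1) x) x := by
  rw [LamE_eq_stepTwoExpSeries, LamO_eq_stepTwoExpSeries, mul_left_comm]
  exact (hasDerivAt_stepTwoExpSeries_altRisingCoeff_zero (p + 1) x).const_mul _

lemma hasDerivAt_LamO (p x : ℝ) : HasDerivAt (LamO p) (LamE (p + 1) x) x := by
  rw [LamE_eq_stepTwoExpSeries, LamO_eq_stepTwoExpSeries, add_assoc, one_add_one_eq_two]
  exact (hasDerivAt_stepTwoExpSeries_altRisingCoeff_succ (p + 2) 0 x).const_mul _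

end Kernels

/-- Derivative formulas: `(Λ^e_p)'(x) = -(p+1) Λ^o_{p+1}(x)` and `(Λ^o_p)'(x) = Λ^e_{p+1}(x)`. -/
theorem stmt_1 (p x : ℝ) :
    deriv (fun y => LamE p y) x = -(p + 1) * LamO (p + 1) x ∧
    deriv (fun y => LamO p y) x = LamE (p + 1) x :=
  ⟨(hasDerivAt_LamE p x).deriv, (hasDerivAt_LamO p x).deriv⟩
end

section
/- For every nonnegative integer n, every real p, and every real x, the 2n-th derivative of Λ^e_p satisfies (d^{2n}/dx^{2n}) Λ^e_p(x) = (-1)^n (p+1)(p+3)⋯(p+2n-1) Λ^e_{p+2n}(x), and the 2n-th derivative of Λ^o_p satisfies (d^{2n}/dx^{2n}) Λ^o_p(x) = (-1)^n (p+2)(p+4)⋯(p+2n) Λ^o_{p+2n}(x) (for n = 0 the empty products equal 1). -/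
open MeasureTheory Filter Real

/-! Term-by-term differentiation shifts the coefficients of an exponential generating function
`∑ aₘ xᵐ / m!`, so its `k`-th derivative has coefficients `aₘ₊ₖ`. Up to the factor `1 / √(2π)`,
`Λ^e_p` and `Λ^o_p` are such series, carried by the even and by the odd exponents, with coefficients
`bₙ(q) = (-1)ⁿ q (q + 2) ⋯ (q + 2n - 2)` at `q = p + 1` and `q = p + 2` respectively. A shift by
`2n` keeps the parity of the exponents, and the theorem becomes the product splitting
`bₘ₊ₙ(q) = bₙ(q) bₘ(q + 2n)`. -/

open scoped Nat

section ExpGenFun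

variable {𝕜 E : Type*} [RCLike 𝕜] [NormedAddCommGroup E] [NormedSpace 𝕜 E]

/-- The exponential generating function `∑ aₙ xⁿ / n!` of a sequence of vectors; its value is
meaningful where the series converges, in particular everywhere under `HasEntireExpGenFun`. -/
noncomputable def expGenFun (a : ℕ → E) (x : 𝕜) : E :=
  ∑' n, (x ^ n / (n ! : 𝕜)) • a n

/-- The exponential generating function of `a` converges absolutely on the whole scalar field. -/
def HasEntireExpGenFun (a : ℕ → E) : Prop :=
  ∀ r : ℝ, Summable fun n => r ^ n / n ! * ‖a n‖

lemma norm_expGenFun_term (a : ℕ → E) (x : 𝕜) (n : ℕ) :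
    ‖(x ^ n / (n ! : 𝕜)) • a n‖ = ‖x‖ ^ n / n ! * ‖a n‖ := by
  rw [norm_smul, norm_div, norm_pow, RCLike.norm_natCast]

lemma expGenFun_const_smul (c : 𝕜) (a : ℕ → E) (x : 𝕜) :
    expGenFun (c • a) x = c • expGenFun a x := by
  simp only [expGenFun, Pi.smul_apply, smul_comm _ c, tsum_const_smul'']

lemma hasDerivAt_pow_succ_div_factorial (n : ℕ) (x : 𝕜) :
    HasDerivAt (fun y : 𝕜 => y ^ (n + 1) / ((n + 1)! : 𝕜)) (x ^ n / (n ! : 𝕜)) x := by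
  refine ((hasDerivAt_pow (n + 1) x).div_const _).congr_deriv ?_
  have hn : (n : 𝕜) + 1 ≠ 0 := by exact_mod_cast n.succ_ne_zero
  rw [Nat.factorial_succ]
  push_cast
  exact mul_div_mul_left _ _ hn

lemma HasEntireExpGenFun.summable [CompleteSpace E] {a : ℕ → E} (ha : HasEntireExpGenFun a)
    (x : 𝕜) : Summable fun n => (x ^ n / (n ! : 𝕜)) • a n :=
  .of_norm <| by simpa only [norm_expGenFun_term] using ha ‖x‖

-- The factor `n + 1` lost in passing from `1 / (n + 1)!` to `1 / n!` is absorbed by enlarging `r`.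
lemma pow_div_factorial_le_pow_succ_div_factorial {r R : ℝ} (hr : 0 ≤ r) (hrR : r ≤ R) (hR : 1 ≤ R)
    (n : ℕ) : r ^ n / n ! ≤ (2 * R) ^ (n + 1) / (n + 1)! := by
  have hn : (n + 1 : ℝ) ≤ 2 ^ (n + 1) := by exact_mod_cast Nat.lt_two_pow_self.le
  rw [Nat.factorial_succ]
  push_cast
  rw [div_le_div_iff₀ (by positivity) (by positivity)]
  calc r ^ n * ((n + 1) * n !) ≤ R ^ (n + 1) * (2 ^ (n + 1) * n !) := by
        gcongr
        exact (pow_le_pow_left₀ hr hrR n).trans (pow_le_pow_right₀ hR n.le_succ)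
    _ = (2 * R) ^ (n + 1) * n ! := by rw [mul_pow]; ring

lemma HasEntireExpGenFun.shift {a : ℕ → E} (ha : HasEntireExpGenFun a) :
    HasEntireExpGenFun fun n => a (n + 1) := by
  intro r
  refine .of_norm_bounded ((summable_nat_add_iff 1).2 (ha (2 * max |r| 1))) fun n => ?_
  rw [norm_mul, norm_norm, norm_div, norm_pow, Real.norm_eq_abs, Real.norm_natCast]
  exact mul_le_mul_of_nonneg_right (pow_div_factorial_le_pow_succ_div_factorial (abs_nonneg r)
    (le_max_left _ _) (le_max_right _ _) n) (norm_nonneg _)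

variable [CompleteSpace E]

lemma expGenFun_eq_add_tsum {a : ℕ → E} (ha : HasEntireExpGenFun a) (x : 𝕜) :
    expGenFun a x = a 0 + ∑' n, (x ^ (n + 1) / ((n + 1)! : 𝕜)) • a (n + 1) := by
  rw [expGenFun, (ha.summable x).tsum_eq_zero_add]
  simp

theorem hasDerivAt_expGenFun {a : ℕ → E} (ha : HasEntireExpGenFun a) (x : 𝕜) :
    HasDerivAt (expGenFun a) (expGenFun (fun n => a (n + 1)) x) x := by
  have hterm (n : ℕ) (y : 𝕜) : HasDerivAt (fun z : 𝕜 => (z ^ (n + 1) / ((n + 1)! : 𝕜)) • a (n + 1))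
      ((y ^ n / (n ! : 𝕜)) • a (n + 1)) y :=
    (hasDerivAt_pow_succ_div_factorial n y).smul_const _
  have hx : x ∈ Metric.ball (0 : 𝕜) (‖x‖ + 1) := by simp
  rw [show expGenFun a = _ from funext (expGenFun_eq_add_tsum ha)]
  refine HasDerivAt.const_add _ ?_
  refine hasDerivAt_tsum_of_isPreconnected (ha.shift (‖x‖ + 1)) Metric.isOpen_ball
    Metric.isPreconnected_ball (fun n y _ => hterm n y) (fun n y hy => ?_) hx
    ((summable_nat_add_iff 1).2 (ha.summable x)) hx
  rw [norm_expGenFun_term (fun n => a (n + 1))]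
  gcongr
  exact (mem_ball_zero_iff.1 hy).le

theorem iteratedDeriv_expGenFun {a : ℕ → E} (ha : HasEntireExpGenFun a) (k : ℕ) :
    iteratedDeriv k (expGenFun a : 𝕜 → E) = expGenFun fun n => a (n + k) := by
  induction k generalizing a with
  | zero => simp
  | succ k ih =>
    have hderiv : deriv (expGenFun a : 𝕜 → E) = expGenFun fun n => a (n + 1) :=
      funext fun x => (hasDerivAt_expGenFun ha x).deriv
    rw [iteratedDeriv_succ', hderiv, ih ha.shift]
    simp only [add_assoc]

end ExpGenFun

section Spread

/-- The sequence carried by the residue class of `j` modulo `d` whose term of index `d * n + j` is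
`b n`, for `j < d`. -/
def spread {α : Type*} [Zero α] (d j : ℕ) (b : ℕ → α) (m : ℕ) : α :=
  if m % d = j then b (m / d) else 0

variable {α : Type*} [Zero α] {d j : ℕ}

lemma spread_mul_add (hj : j < d) (b : ℕ → α) (n : ℕ) : spread d j b (d * n + j) = b n := by
  have hd : 0 < d := j.zero_le.trans_lt hj
  simp [spread, Nat.mod_eq_of_lt hj, Nat.mul_add_div hd, Nat.div_eq_of_lt hj]

lemma spread_eq_zero {m : ℕ} (b : ℕ → α) (hm : m ∉ Set.range fun n => d * n + j) :
    spread d j b m = 0 :=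
  if_neg fun h => hm ⟨m / d, by simp only [← h, Nat.div_add_mod]⟩

lemma spread_add_mul (hd : 0 < d) (b : ℕ → α) (m n : ℕ) :
    spread d j b (m + d * n) = spread d j (fun i => b (i + n)) m := by
  simp only [spread, Nat.add_mul_mod_self_left, Nat.add_mul_div_left _ _ hd]

lemma spread_const_smul {R M : Type*} [Zero M] [SMulZeroClass R M] (c : R) (b : ℕ → M) :
    spread d j (c • b) = c • spread d j b := by
  funext m
  simp only [spread, Pi.smul_apply, smul_ite, smul_zero]

lemma mul_add_const_injective (hd : 0 < d) : Function.Injective fun n => d * n + j :=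
  (add_left_injective j).comp (mul_right_injective₀ hd.ne')

lemma expGenFun_spread {𝕜 E : Type*} [RCLike 𝕜] [NormedAddCommGroup E] [NormedSpace 𝕜 E]
    (hj : j < d) (b : ℕ → E) (x : 𝕜) :
    expGenFun (spread d j b) x = ∑' n, (x ^ (d * n + j) / ((d * n + j)! : 𝕜)) • b n := by
  rw [expGenFun, ← (mul_add_const_injective (j := j) (j.zero_le.trans_lt hj)).tsum_eq]
  · simp only [spread_mul_add hj]
  · exact Function.support_subset_iff'.2 fun m hm => by rw [spread_eq_zero b hm, smul_zero]

lemma factorial_mul_factorial_le_factorial (hd : 2 ≤ d) (n : ℕ) : n ! * n ! ≤ (d * n + j)! :=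
  calc n ! * n ! ≤ (n + n)! :=
        Nat.le_of_dvd (n + n).factorial_pos (Nat.factorial_mul_factorial_dvd_factorial_add n n)
    _ ≤ (d * n + j)! := Nat.factorial_le (by nlinarith)

theorem hasEntireExpGenFun_spread {E : Type*} [NormedAddCommGroup E] {b : ℕ → E} {C : ℝ}
    (hd : 2 ≤ d) (hj : j < d) (hb : ∀ n, ‖b n‖ ≤ C ^ n * n !) :
    HasEntireExpGenFun (spread d j b) := by
  intro r
  rw [← (mul_add_const_injective (j := j) (j.zero_le.trans_lt hj)).summable_iff fun m hm => by
    rw [spread_eq_zero b hm, norm_zero, mul_zero]]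
  refine .of_norm_bounded
    ((Real.summable_pow_div_factorial (|r| ^ d * C)).mul_left (|r| ^ j)) fun n => ?_
  have hfact : (n ! * n ! : ℝ) ≤ (d * n + j)! := by
    exact_mod_cast factorial_mul_factorial_le_factorial hd n
  rw [Function.comp_apply, spread_mul_add hj, norm_mul, norm_norm, norm_div, norm_pow,
    Real.norm_eq_abs, Real.norm_natCast]
  calc |r| ^ (d * n + j) / (d * n + j)! * ‖b n‖
      ≤ |r| ^ (d * n + j) / (n ! * n !) * (C ^ n * n !) := by gcongr; exact hb n
    _ = |r| ^ j * ((|r| ^ d * C) ^ n / n !) := by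
        rw [pow_add, pow_mul, mul_pow]
        field_simp

end Spread

/-- The coefficients `(-1)ⁿ q (q + 2) ⋯ (q + 2n - 2)` common to `Λ^e_{q-1}` and `Λ^o_{q-2}`. -/
def kernelCoeff (q : ℝ) (n : ℕ) : ℝ :=
  (-1) ^ n * ∏ k ∈ Finset.range n, (q + 2 * k)

lemma kernelCoeff_add (q : ℝ) (m n : ℕ) :
    kernelCoeff q (m + n) = kernelCoeff q n * kernelCoeff (q + 2 * n) m := by
  have hshift (k : ℕ) : q + 2 * ((n + k : ℕ) : ℝ) = q + 2 * n + 2 * k := by push_cast; ring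
  rw [add_comm m n, kernelCoeff, Finset.prod_range_add, pow_add]
  simp only [hshift, kernelCoeff]
  ring

lemma norm_kernelCoeff_le (q : ℝ) (n : ℕ) : ‖kernelCoeff q n‖ ≤ (|q| + 2) ^ n * n ! := by
  have hfactor (k : ℕ) : |q + 2 * k| ≤ (|q| + 2) * (k + 1) :=
    calc |q + 2 * k| ≤ |q| + |2 * (k : ℝ)| := abs_add_le _ _
      _ = |q| + 2 * k := by rw [abs_of_nonneg (a := 2 * (k : ℝ)) (by positivity)]
      _ ≤ (|q| + 2) * (k + 1) := by nlinarith [abs_nonneg q, k.cast_nonneg (α := ℝ)]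
  calc ‖kernelCoeff q n‖ = ∏ k ∈ Finset.range n, |q + 2 * k| := by
        simp [kernelCoeff]
    _ ≤ ∏ k ∈ Finset.range n, (|q| + 2) * ((k : ℝ) + 1) :=
        Finset.prod_le_prod (fun _ _ => abs_nonneg _) fun k _ => hfactor k
    _ = (|q| + 2) ^ n * n ! := by
        rw [Finset.prod_mul_distrib, Finset.prod_const, Finset.card_range,
          ← Finset.prod_range_add_one_eq_factorial]
        push_cast
        rfl

theorem iteratedDeriv_expGenFun_kernelCoeff {j : ℕ} (hj : j < 2) (q : ℝ) (n : ℕ) (x : ℝ) :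
    iteratedDeriv (2 * n) (expGenFun (spread 2 j (kernelCoeff q))) x =
      kernelCoeff q n * expGenFun (spread 2 j (kernelCoeff (q + 2 * n))) x := by
  have hcoeff : (fun i => kernelCoeff q (i + n)) = kernelCoeff q n • kernelCoeff (q + 2 * n) :=
    funext fun i => kernelCoeff_add q i n
  rw [iteratedDeriv_expGenFun (hasEntireExpGenFun_spread le_rfl hj (norm_kernelCoeff_le q))]
  simp only [spread_add_mul two_pos, hcoeff, spread_const_smul]
  exact expGenFun_const_smul _ _ _

lemma kernelCoeff_add_one (p : ℝ) (n : ℕ) :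
    kernelCoeff (p + 1) n = (-1) ^ n * ∏ k ∈ Finset.range n, (p + 2 * (k : ℝ) + 1) := by
  simp only [kernelCoeff, add_right_comm p 1]

lemma kernelCoeff_add_two (p : ℝ) (n : ℕ) :
    kernelCoeff (p + 2) n = (-1) ^ n * ∏ k ∈ Finset.range n, (p + 2 * ((k : ℝ) + 1)) := by
  simp only [kernelCoeff, mul_add_one, add_assoc, add_comm (2 : ℝ)]

lemma LamE_eq_expGenFun (p : ℝ) :
    LamE p = fun x => 1 / √(2 * π) * expGenFun (spread 2 0 (kernelCoeff (p + 1))) x := by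
  funext x
  simp only [LamE, expGenFun_spread two_pos, kernelCoeff_add_one, smul_eq_mul, add_zero,
    div_mul_eq_mul_div, mul_comm (x ^ _)]

lemma LamO_eq_expGenFun (p : ℝ) :
    LamO p = fun x => 1 / √(2 * π) * expGenFun (spread 2 1 (kernelCoeff (p + 2))) x := by
  funext x
  simp only [LamO, expGenFun_spread one_lt_two, kernelCoeff_add_two, smul_eq_mul,
    div_mul_eq_mul_div, mul_comm (x ^ _)]

/-- The `2n`-th derivatives of `Λ^e_p` and `Λ^o_p`:
`(d^{2n}/dx^{2n}) Λ^e_p(x) = (-1)^n (p+1)(p+3)⋯(p+2n-1) Λ^e_{p+2n}(x)` and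
`(d^{2n}/dx^{2n}) Λ^o_p(x) = (-1)^n (p+2)(p+4)⋯(p+2n) Λ^o_{p+2n}(x)`. -/
theorem stmt_2 (n : ℕ) (p x : ℝ) :
    iteratedDeriv (2 * n) (fun y => LamE p y) x =
      (-1 : ℝ) ^ n * (∏ k ∈ Finset.range n, (p + 2 * (k : ℝ) + 1)) * LamE (p + 2 * n) x ∧
    iteratedDeriv (2 * n) (fun y => LamO p y) x =
      (-1 : ℝ) ^ n * (∏ k ∈ Finset.range n, (p + 2 * ((k : ℝ) + 1))) * LamO (p + 2 * n) x := by
  constructor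
  · rw [← kernelCoeff_add_one, LamE_eq_expGenFun, LamE_eq_expGenFun,
      iteratedDeriv_const_mul_field, iteratedDeriv_expGenFun_kernelCoeff two_pos,
      add_right_comm, mul_left_comm]
  · rw [← kernelCoeff_add_two, LamO_eq_expGenFun, LamO_eq_expGenFun,
      iteratedDeriv_const_mul_field, iteratedDeriv_expGenFun_kernelCoeff one_lt_two,
      add_right_comm, mul_left_comm]
end

section
/- If p is a real number that is not a nonnegative even integer, then there exists a nonzero real constant C₁ such that Λ^e_p(x) = C₁ x^{-p-1} (1 + O(x^{-2})) as x → +∞, i.e. x^{p+1} Λ^e_p(x) − C₁ = O(x^{-2}) as x → +∞. Likewise, if p is a real number that is not a nonnegative odd integer, then there exists a nonzero real constant C₂ such that Λ^o_p(x) = C₂ x^{-p-1} (1 + O(x^{-2})) as x → +∞. -/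
open MeasureTheory Filter Real

/-!
Up to elementary factors, the two kernels are Kummer functions `M(a, b, -z)` with `z = x² / 2`:
`a = (p + 1) / 2`, `b = 1 / 2` in the even case and `a = (p + 2) / 2`, `b = 3 / 2` in the odd case.
So let `g_a(z) = z ^ a M(a, b, -z)`; we need `g_a = C_a + O(1 / z)` with `C_a ≠ 0` unless
`a ∈ b + ℕ`.

The derivative is `g_a' = a z ^ (a - 1) M(a + 1, b, -z) = a z⁻² g_{a + 1}`, so boundedness of
`g_{a + 1}` gives the expansion of `g_a`, and in particular boundedness of `g_a`. It is therefore
enough to bound `g_a` for large `a`. There Kummer's transformation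
`e ^ z M(a, b, -z) = M(b - a, b, z)` helps: the coefficients `(b - a)_n / (b)_n` decay like
`n! / (n + m)!` for every natural `m ≤ a`, whence `M(a, b, -z) = O(z ^ (-m))`.

The contiguous relation between `M(a, b, ·)`, `M(a + 1, b, ·)` and `M(a + 2, b, ·)` yields
`C_{a + 1} = (b - a - 1) C_a`, so `C_a ≠ 0` need only be checked for `-1 < a ≤ 0`. In that range
Kummer's transformation gives `M(a, b, -z) ≥ 1`, whereas `C_a = 0` would force
`M(a, b, -z) = O(z ^ (-a - 1)) → 0`.
-/

open Asymptotics Polynomial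
open Finset.HasAntidiagonal (antidiagonal mem_antidiagonal)
open scoped Nat Topology

theorem bddAbove_range_of_eventually_succ_le {α : Type*} [Preorder α] [IsDirectedOrder α]
    {u : ℕ → α} (h : ∀ᶠ n in atTop, u (n + 1) ≤ u n) : BddAbove (Set.range u) := by
  obtain ⟨N, hN⟩ := eventually_atTop.1 h
  have hanti : AntitoneOn u (Set.Ici N) := antitoneOn_nat_Ici_of_succ_le hN
  refine IsBoundedUnder.bddAbove_range (isBoundedUnder_of_eventually_le (a := u N) ?_)
  filter_upwards [eventually_ge_atTop N] with n hn
  exact hanti Set.self_mem_Ici hn hn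

theorem exists_sub_isBigO_rpow_of_hasDerivAt {E : Type*} [NormedAddCommGroup E] [NormedSpace ℝ E]
    [CompleteSpace E] {f f' : ℝ → E} {s : ℝ} (hs : s < 0)
    (hf : ∀ᶠ z in atTop, HasDerivAt f (f' z) z) (hf' : f' =O[atTop] fun z => z ^ (s - 1)) :
    ∃ C, (fun z => f z - C) =O[atTop] fun z => z ^ s := by
  obtain ⟨K, hK⟩ := hf'.bound
  obtain ⟨z₀, hz₀⟩ := eventually_atTop.1 ((hf.and hK).and (eventually_gt_atTop 0))
  have hderiv : ∀ z ≥ z₀, HasDerivAt f (deriv f z) z := fun z hz =>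
    (hz₀ z hz).1.1.differentiableAt.hasDerivAt
  have hbound : ∀ z ≥ z₀, ‖deriv f z‖ ≤ K * z ^ (s - 1) := fun z hz => by
    obtain ⟨⟨hd, hb⟩, hpos⟩ := hz₀ z hz
    rwa [hd.deriv, ← norm_of_nonneg (rpow_nonneg hpos.le (s - 1))]
  have hpow : ∀ z ≥ z₀, IntegrableOn (fun t => K * t ^ (s - 1)) (Set.Ioi z) := fun z hz =>
    (integrableOn_Ioi_rpow_of_lt (by linarith) (hz₀ z hz).2).const_mul K
  have hae : ∀ z ≥ z₀, ∀ᵐ t ∂volume.restrict (Set.Ioi z), ‖deriv f t‖ ≤ K * t ^ (s - 1) :=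
    fun z hz => (ae_restrict_iff' measurableSet_Ioi).2 <|
      .of_forall fun t ht => hbound t (hz.trans (le_of_lt ht))
  have hint : ∀ z ≥ z₀, IntegrableOn (deriv f) (Set.Ioi z) := fun z hz =>
    (hpow z hz).mono' (aestronglyMeasurable_deriv f _) (hae z hz)
  have hlim := tendsto_limUnder_of_hasDerivAt_of_integrableOn_Ioi
    (fun z hz => hderiv z (le_of_lt hz)) (hint z₀ le_rfl)
  refine ⟨limUnder atTop f, IsBigO.of_bound (K / -s) ?_⟩
  filter_upwards [eventually_ge_atTop z₀] with z hz
  have hpos := (hz₀ z hz).2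
  calc ‖f z - limUnder atTop f‖ = ‖∫ t in Set.Ioi z, deriv f t‖ := by
        rw [integral_Ioi_of_hasDerivAt_of_tendsto' (fun t ht => hderiv t (hz.trans ht))
          (hint z hz) hlim, norm_sub_rev]
    _ ≤ ∫ t in Set.Ioi z, K * t ^ (s - 1) := norm_integral_le_of_norm_le (hpow z hz) (hae z hz)
    _ = K / -s * ‖z ^ s‖ := by
        rw [integral_const_mul, integral_Ioi_rpow_of_lt (by linarith) hpos,
          norm_of_nonneg (rpow_nonneg hpos.le s), sub_add_cancel]
        field_simp

theorem tendsto_of_sub_isBigO_rpow {E : Type*} [NormedAddCommGroup E] {f : ℝ → E} {C : E} {s : ℝ}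
    (hs : s < 0) (h : (fun z => f z - C) =O[atTop] fun z => z ^ s) : Tendsto f atTop (𝓝 C) := by
  have hz : Tendsto (fun z : ℝ => z ^ s) atTop (𝓝 0) := by
    simpa using tendsto_rpow_neg_atTop (neg_pos.2 hs)
  exact tendsto_sub_nhds_zero_iff.1 (h.trans_tendsto hz)

section ExponentialGeneratingFunction

variable {c : ℕ → ℝ} {K A : ℝ}

theorem summable_mul_pow_div_factorial (hc : ∀ n, |c n| ≤ K * A ^ n) (z : ℝ) :
    Summable fun n => c n * z ^ n / n ! := by
  refine .of_norm_bounded ((Real.summable_pow_div_factorial (A * |z|)).mul_left K) fun n => ?_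
  rw [norm_eq_abs, abs_div, abs_mul, abs_pow, Nat.abs_cast, mul_pow, ← mul_div_assoc, ← mul_assoc]
  gcongr
  exact hc n

theorem summable_mul_pow_pred_div_factorial (K A R : ℝ) :
    Summable fun n : ℕ => K * A ^ n * (n * R ^ (n - 1)) / n ! := by
  rw [← summable_nat_add_iff 1]
  refine ((Real.summable_pow_div_factorial (A * R)).mul_left (K * A)).congr fun n => ?_
  rw [Nat.factorial_succ, Nat.add_sub_cancel]
  push_cast
  field_simp
  ring

theorem hasDerivAt_tsum_mul_pow_div_factorial (hc : ∀ n, |c n| ≤ K * A ^ n) (z : ℝ) :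
    HasDerivAt (fun z => ∑' n, c n * z ^ n / n !) (∑' n : ℕ, c n * (n * z ^ (n - 1)) / n !) z := by
  have hR : 0 < |z| + 1 := by positivity
  refine hasDerivAt_tsum_of_isPreconnected (t := Metric.ball 0 (|z| + 1)) (y₀ := 0)
    (summable_mul_pow_pred_div_factorial K A (|z| + 1)) Metric.isOpen_ball
    (convex_ball _ _).isPreconnected
    (fun n y _ => ((hasDerivAt_pow n y).const_mul (c n)).div_const _) (fun n y hy => ?_)
    (Metric.mem_ball_self hR) (summable_mul_pow_div_factorial hc 0) (by simp)
  have hy' : |y| ≤ |z| + 1 := (mem_ball_zero_iff.1 hy).le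
  rw [norm_eq_abs, abs_div, abs_mul, abs_mul, abs_pow, Nat.abs_cast, Nat.abs_cast]
  have hKA : 0 ≤ K * A ^ n := (abs_nonneg _).trans (hc n)
  gcongr
  exact hc n

theorem pow_mul_abs_tsum_mul_pow_div_factorial_le {m : ℕ} (hc : ∀ n, |c n| ≤ K * (n ! / (n + m)!))
    {z : ℝ} (hz : 0 ≤ z) : z ^ m * |∑' n, c n * z ^ n / n !| ≤ K * exp z := by
  have hK : 0 ≤ K := nonneg_of_mul_nonneg_left ((abs_nonneg _).trans (hc 0)) (by positivity)
  have hexp := Real.summable_pow_div_factorial z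
  have htail : ∑' n : ℕ, z ^ (n + m) / (n + m)! ≤ exp z := by
    rw [exp_eq_exp_ℝ, NormedSpace.exp_eq_tsum_div]
    exact tsum_comp_le_tsum_of_inj hexp (fun n => by positivity) (add_left_injective m)
  have hterm (n : ℕ) : ‖z ^ m * (c n * z ^ n / n !)‖ ≤ K * (z ^ (n + m) / (n + m)!) := calc
    _ = z ^ m * (|c n| * z ^ n / n !) := by
      simp only [norm_eq_abs, abs_mul, abs_div, abs_pow, abs_of_nonneg hz, Nat.abs_cast]
    _ ≤ z ^ m * (K * (n ! / (n + m)!) * z ^ n / n !) := by gcongr; exact hc n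
    _ = K * (z ^ (n + m) / (n + m)!) := by field_simp; ring
  calc z ^ m * |∑' n, c n * z ^ n / n !| = ‖∑' n, z ^ m * (c n * z ^ n / n !)‖ := by
        rw [tsum_mul_left, norm_mul, norm_of_nonneg (pow_nonneg hz m), norm_eq_abs]
    _ ≤ K * ∑' n : ℕ, z ^ (n + m) / (n + m)! :=
        tsum_of_norm_bounded (((summable_nat_add_iff m).2 hexp).hasSum.mul_left K) hterm
    _ ≤ K * exp z := by gcongr

end ExponentialGeneratingFunction

theorem add_one_add_natCast_ne_zero {R : Type*} [AddMonoidWithOne R] {b : R}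
    (hb : ∀ k : ℕ, b + k ≠ 0) (k : ℕ) : b + 1 + k ≠ 0 := by
  rw [add_assoc, ← Nat.cast_one, ← Nat.cast_add]
  exact hb (1 + k)

theorem ascPochhammer_eval_ne_zero {R : Type*} [CommRing R] [IsDomain R] {b : R}
    (hb : ∀ k : ℕ, b + k ≠ 0) (n : ℕ) : (ascPochhammer R n).eval b ≠ 0 := by
  rw [Ne, ascPochhammer_eval_eq_zero_iff]
  rintro ⟨k, -, hk⟩
  exact hb k (by rw [hk, add_neg_cancel])

theorem ascPochhammer_succ_eval_left {R : Type*} [CommSemiring R] (a : R) (n : ℕ) :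
    (ascPochhammer R (n + 1)).eval a = a * (ascPochhammer R n).eval (a + 1) := by
  simp [ascPochhammer_succ_left]

/-- The ratio `(a)_n / (b)_n` of rising factorials, the coefficient sequence of Kummer's function.
Its value is `0` when `(b)_n = 0`. -/
noncomputable def pochhammerRatio (a b : ℝ) (n : ℕ) : ℝ :=
  (ascPochhammer ℝ n).eval a / (ascPochhammer ℝ n).eval b

section pochhammerRatio

variable (a b : ℝ) (n : ℕ)

@[simp]
theorem pochhammerRatio_zero : pochhammerRatio a b 0 = 1 := by simp [pochhammerRatio]

theorem pochhammerRatio_succ :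
    pochhammerRatio a b (n + 1) = pochhammerRatio a b n * ((a + n) / (b + n)) := by
  simp only [pochhammerRatio, ascPochhammer_succ_eval, mul_div_mul_comm]

theorem pochhammerRatio_succ_left :
    pochhammerRatio a b (n + 1) = a / b * pochhammerRatio (a + 1) (b + 1) n := by
  simp only [pochhammerRatio, ascPochhammer_succ_eval_left, mul_div_mul_comm]

theorem add_natCast_mul_pochhammerRatio :
    (a + n) * pochhammerRatio a b n = a * pochhammerRatio (a + 1) b n := by
  have h := (ascPochhammer_succ_eval_left a n).symm.trans (ascPochhammer_succ_eval n a)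
  rw [pochhammerRatio, pochhammerRatio, ← mul_div_assoc, ← mul_div_assoc, h, mul_comm]

theorem mul_pochhammerRatio_eq_add_one_right {b : ℝ} (hb : ∀ k : ℕ, b + k ≠ 0) :
    b * pochhammerRatio a b n = (b + n) * pochhammerRatio a (b + 1) n := by
  have h := (ascPochhammer_succ_eval_left b n).symm.trans (ascPochhammer_succ_eval n b)
  have hne := ascPochhammer_eval_ne_zero hb n
  have hne' := ascPochhammer_eval_ne_zero (add_one_add_natCast_ne_zero hb) n
  simp only [pochhammerRatio]
  field_simp
  linear_combination (ascPochhammer ℝ n).eval a * h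

theorem exists_abs_pochhammerRatio_le_mul_two_pow :
    ∃ K, ∀ n, |pochhammerRatio a b n| ≤ K * 2 ^ n := by
  obtain ⟨K, hK⟩ := bddAbove_range_of_eventually_succ_le
    (u := fun n => |pochhammerRatio a b n| / 2 ^ n) <| by
    filter_upwards [eventually_ge_atTop ⌈|a| + 2 * |b|⌉₊] with n hn
    have hn' : |a| + 2 * |b| ≤ n := Nat.ceil_le.1 hn
    have hfac : |(a + n) / (b + n)| ≤ 2 := by
      rw [abs_div]
      refine div_le_of_le_mul₀ (abs_nonneg _) zero_le_two ?_
      rw [abs_of_nonneg (show 0 ≤ a + n by linarith [neg_abs_le a, abs_nonneg b])]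
      linarith [le_abs_self a, neg_abs_le b, le_abs_self (b + n)]
    calc |pochhammerRatio a b (n + 1)| / 2 ^ (n + 1)
        = |pochhammerRatio a b n| / 2 ^ n * (|(a + n) / (b + n)| / 2) := by
          rw [pochhammerRatio_succ, abs_mul, pow_succ, mul_div_mul_comm]
      _ ≤ |pochhammerRatio a b n| / 2 ^ n :=
          mul_le_of_le_one_right (by positivity) ((div_le_one zero_lt_two).2 hfac)
  exact ⟨K, fun n => (div_le_iff₀ (by positivity)).1 (hK ⟨n, rfl⟩)⟩

theorem exists_abs_pochhammerRatio_sub_le_factorial_div {a b : ℝ} {m : ℕ} (hm : m ≤ a)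
    (hab : b - 1 ≤ a) :
    ∃ K, ∀ n, |pochhammerRatio (b - a) b n| ≤ K * (n ! / (n + m)!) := by
  obtain ⟨K, hK⟩ := bddAbove_range_of_eventually_succ_le
    (u := fun n => |pochhammerRatio (b - a) b n| * ((n + m)! / n !)) <| by
    filter_upwards [eventually_ge_atTop ⌈|a| + |b| + 1⌉₊] with n hn
    have hn' : |a| + |b| + 1 ≤ n := Nat.ceil_le.1 hn
    have hnum : 0 ≤ b - a + n := by linarith [le_abs_self a, neg_abs_le b]
    have hden : 0 < b + n := by linarith [abs_nonneg a, neg_abs_le b]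
    have hfac : (b - a + n) / (b + n) * ((n + 1 + m) / (n + 1)) ≤ 1 := by
      rw [div_mul_div_comm, div_le_one (by positivity)]
      nlinarith [mul_nonneg m.cast_nonneg (sub_nonneg.2 hab)]
    calc |pochhammerRatio (b - a) b (n + 1)| * ((n + 1 + m)! / (n + 1)!)
        = |pochhammerRatio (b - a) b n| * ((n + m)! / n !) *
          ((b - a + n) / (b + n) * ((n + 1 + m) / (n + 1))) := by
          rw [pochhammerRatio_succ, abs_mul, abs_of_nonneg (div_nonneg hnum hden.le),
            Nat.add_right_comm, Nat.factorial_succ, Nat.factorial_succ]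
          push_cast
          field_simp
          ring
      _ ≤ _ := mul_le_of_le_one_right (by positivity) hfac
  refine ⟨K, fun n => ?_⟩
  rw [← div_le_iff₀ (by positivity), div_div_eq_mul_div, ← mul_div_assoc']
  exact hK ⟨n, rfl⟩

theorem one_le_pochhammerRatio {a b : ℝ} (hb : 0 < b) (hba : b ≤ a) :
    1 ≤ pochhammerRatio a b n := by
  induction n with
  | zero => simp
  | succ n ih =>
    rw [pochhammerRatio_succ]
    exact one_le_mul_of_one_le_of_one_le ih ((one_le_div (by positivity)).2 (by gcongr))

/-- The Chu–Vandermonde identity, divided by `(b)_n`. -/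
theorem sum_antidiagonal_choose_mul_pochhammerRatio {b : ℝ} (hb : ∀ k : ℕ, b + k ≠ 0) :
    ∑ ij ∈ antidiagonal n, (n.choose ij.1 : ℝ) * ((-1) ^ ij.1 * pochhammerRatio a b ij.1) =
      pochhammerRatio (b - a) b n := by
  induction n generalizing a b with
  | zero => simp
  | succ n ih =>
    have hshift : ∑ ij ∈ antidiagonal n,
        (n.choose ij.2 : ℝ) * ((-1) ^ (ij.1 + 1) * pochhammerRatio a b (ij.1 + 1)) =
          -(a / b) * pochhammerRatio (b - a) (b + 1) n := by
      rw [← add_sub_add_right_eq_sub b a 1, ← ih (a + 1) (add_one_add_natCast_ne_zero hb),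
        Finset.mul_sum]
      refine Finset.sum_congr rfl fun ij hij => ?_
      rw [pochhammerRatio_succ_left, Nat.choose_symm_of_eq_add (mem_antidiagonal.1 hij).symm,
        pow_succ]
      ring
    rw [Finset.sum_antidiagonal_choose_succ_mul (fun i _ => (-1) ^ i * pochhammerRatio a b i) n,
      ih a hb, hshift, pochhammerRatio_succ]
    have hb0 : b ≠ 0 := by simpa using hb 0
    have hbn := hb n
    field_simp
    linear_combination a * mul_pochhammerRatio_eq_add_one_right (b - a) n hb

end pochhammerRatio

/-- Kummer's confluent hypergeometric function `M(a, b, z) = ₁F₁(a; b; z)` of real arguments. -/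
noncomputable def kummerM (a b z : ℝ) : ℝ := ∑' n, pochhammerRatio a b n * z ^ n / n !

section kummerM

variable (a : ℝ) {b : ℝ}

theorem summable_kummerM (a b z : ℝ) : Summable fun n => pochhammerRatio a b n * z ^ n / n ! :=
  summable_mul_pow_div_factorial (exists_abs_pochhammerRatio_le_mul_two_pow a b).choose_spec z

theorem differentiable_kummerM (a b : ℝ) : Differentiable ℝ (kummerM a b) := fun z =>
  (hasDerivAt_tsum_mul_pow_div_factorial
    (exists_abs_pochhammerRatio_le_mul_two_pow a b).choose_spec z).differentiableAt

theorem mul_deriv_kummerM (a b z : ℝ) :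
    z * deriv (kummerM a b) z = a * (kummerM (a + 1) b z - kummerM a b z) := by
  have hderiv : deriv (kummerM a b) z = ∑' n : ℕ, pochhammerRatio a b n * (n * z ^ (n - 1)) / n ! :=
    (hasDerivAt_tsum_mul_pow_div_factorial
      (exists_abs_pochhammerRatio_le_mul_two_pow a b).choose_spec z).deriv
  rw [hderiv, kummerM, kummerM, ← (summable_kummerM (a + 1) b z).tsum_sub (summable_kummerM a b z),
    ← tsum_mul_left, ← tsum_mul_left]
  refine tsum_congr fun n => ?_
  have hpow : z * (n * z ^ (n - 1)) = n * z ^ n := by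
    cases n with
    | zero => simp
    | succ n => rw [Nat.add_sub_cancel]; ring
  linear_combination pochhammerRatio a b n / n ! * hpow +
    z ^ n / n ! * add_natCast_mul_pochhammerRatio a b n

/-- Kummer's transformation. -/
theorem kummerM_sub_eq_exp_mul_kummerM_neg (hb : ∀ k : ℕ, b + k ≠ 0) (z : ℝ) :
    kummerM (b - a) b z = exp z * kummerM a b (-z) := by
  rw [mul_comm, exp_eq_exp_ℝ, NormedSpace.exp_eq_tsum_div, kummerM, kummerM,
    tsum_mul_tsum_eq_tsum_sum_antidiagonal_of_summable_norm (summable_kummerM a b (-z)).norm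
      (Real.summable_pow_div_factorial z).norm]
  refine tsum_congr fun n => ?_
  rw [← sum_antidiagonal_choose_mul_pochhammerRatio a n hb, Finset.sum_mul, Finset.sum_div]
  refine Finset.sum_congr rfl ?_
  rintro ⟨i, j⟩ hij
  obtain rfl : i + j = n := mem_antidiagonal.1 hij
  rw [Nat.cast_add_choose, neg_pow z, pow_add]
  field_simp

theorem kummerM_neg_contiguous (hb : ∀ k : ℕ, b + k ≠ 0) (z : ℝ) :
    (b - a) * kummerM (a - 1) b (-z) =
      (z + b - 2 * a) * kummerM a b (-z) + a * kummerM (a + 1) b (-z) := by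
  have hprod : HasDerivAt (kummerM (b - a) b)
      (exp z * kummerM a b (-z) + exp z * (deriv (kummerM a b) (-z) * -1)) z := by
    rw [funext (kummerM_sub_eq_exp_mul_kummerM_neg a hb)]
    exact (hasDerivAt_exp z).mul
      ((differentiable_kummerM a b (-z)).hasDerivAt.comp z (hasDerivAt_neg z))
  have hleft := mul_deriv_kummerM (b - a) b z
  have hright := mul_deriv_kummerM a b (-z)
  rw [hprod.deriv, sub_add, kummerM_sub_eq_exp_mul_kummerM_neg a hb,
    kummerM_sub_eq_exp_mul_kummerM_neg (a - 1) hb] at hleft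
  refine mul_left_cancel₀ (exp_ne_zero z) ?_
  linear_combination exp z * hright - hleft

theorem kummerM_neg_isBigO_rpow (hb : ∀ k : ℕ, b + k ≠ 0) {m : ℕ} (hm : m ≤ a) (hab : b - 1 ≤ a) :
    (fun z => kummerM a b (-z)) =O[atTop] fun z => z ^ (-m : ℝ) := by
  obtain ⟨K, hK⟩ := exists_abs_pochhammerRatio_sub_le_factorial_div hm hab
  refine IsBigO.of_bound K ?_
  filter_upwards [eventually_gt_atTop 0] with z hz
  have hle : z ^ m * |kummerM (b - a) b z| ≤ K * exp z :=
    pow_mul_abs_tsum_mul_pow_div_factorial_le hK hz.le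
  rw [kummerM_sub_eq_exp_mul_kummerM_neg a hb, abs_mul, abs_of_pos (exp_pos z)] at hle
  rw [norm_eq_abs, norm_of_nonneg (rpow_nonneg hz.le _), rpow_neg hz.le, rpow_natCast,
    ← div_eq_mul_inv, le_div_iff₀ (by positivity)]
  exact le_of_mul_le_mul_left (by linarith) (exp_pos z)

theorem one_le_kummerM_neg (hb : 0 < b) {a z : ℝ} (ha : a ≤ 0) (hz : 0 ≤ z) :
    1 ≤ kummerM a b (-z) := by
  have hle : exp z ≤ kummerM (b - a) b z := by
    rw [exp_eq_exp_ℝ, NormedSpace.exp_eq_tsum_div]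
    refine (Real.summable_pow_div_factorial z).tsum_le_tsum (fun n => ?_)
      (summable_kummerM (b - a) b z)
    gcongr
    exact le_mul_of_one_le_left (by positivity) (one_le_pochhammerRatio n hb (by linarith))
  rw [kummerM_sub_eq_exp_mul_kummerM_neg a fun k => by positivity] at hle
  exact (le_mul_iff_one_le_right (exp_pos z)).1 hle

end kummerM

/-- The function `z ^ a M(a, b, -z)`, which converges as `z → +∞`: its limit is the leading
coefficient of the asymptotic expansion of `M(a, b, -z)`. -/
noncomputable def scaledKummerM (a b z : ℝ) : ℝ := z ^ a * kummerM a b (-z)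

section scaledKummerM

variable {a b : ℝ}

theorem hasDerivAt_scaledKummerM (a b : ℝ) {z : ℝ} (hz : 0 < z) :
    HasDerivAt (scaledKummerM a b) (a * (z ^ (a - 1) * kummerM (a + 1) b (-z))) z := by
  have hM := (differentiable_kummerM a b (-z)).hasDerivAt.comp z (hasDerivAt_neg z)
  refine ((hasDerivAt_rpow_const (p := a) (.inl hz.ne')).mul hM).congr_deriv ?_
  have hpow : z ^ a = z ^ (a - 1) * z := by rw [← rpow_add_one hz.ne', sub_add_cancel]
  rw [Function.comp_apply, hpow]
  linear_combination z ^ (a - 1) * mul_deriv_kummerM a b (-z)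

theorem exists_scaledKummerM_sub_isBigO {s : ℝ} (hs : s < 0)
    (h : (fun z => kummerM (a + 1) b (-z)) =O[atTop] fun z => z ^ (s - a)) :
    ∃ C, (fun z => scaledKummerM a b z - C) =O[atTop] fun z => z ^ s := by
  refine exists_sub_isBigO_rpow_of_hasDerivAt hs
    ((eventually_gt_atTop 0).mono fun z hz => hasDerivAt_scaledKummerM a b hz)
    (IsBigO.const_mul_left ?_ a)
  refine ((isBigO_refl (fun z : ℝ => z ^ (a - 1)) atTop).mul h).congr' .rfl ?_
  filter_upwards [eventually_gt_atTop 0] with z hz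
  rw [← rpow_add hz]
  ring_nf

theorem scaledKummerM_isBigO_one_of_le (hb : ∀ k : ℕ, b + k ≠ 0) (ha : 0 ≤ a) (hab : b ≤ a) :
    scaledKummerM a b =O[atTop] fun _ => (1 : ℝ) := by
  have hfloor := Nat.floor_le ha
  have hlt := Nat.lt_floor_add_one a
  obtain ⟨C, hC⟩ := exists_scaledKummerM_sub_isBigO (s := a - (⌊a⌋₊ + 1 : ℕ))
    (by push_cast; linarith) <| by
      rw [sub_sub_cancel_left]
      exact kummerM_neg_isBigO_rpow _ hb (by push_cast; linarith) (by linarith)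
  exact (tendsto_of_sub_isBigO_rpow (by push_cast; linarith) hC).isBigO_one ℝ

theorem exists_scaledKummerM_sub_isBigO_of_isBigO_one
    (h : scaledKummerM (a + 1) b =O[atTop] fun _ => (1 : ℝ)) :
    ∃ C, (fun z => scaledKummerM a b z - C) =O[atTop] fun z => z ^ (-1 : ℝ) := by
  refine exists_scaledKummerM_sub_isBigO neg_one_lt_zero ?_
  refine ((isBigO_refl (fun z : ℝ => z ^ (-1 - a)) atTop).mul h).congr' ?_ (by simp)
  filter_upwards [eventually_gt_atTop 0] with z hz
  rw [scaledKummerM, ← mul_assoc, ← rpow_add hz, show -1 - a + (a + 1) = 0 by ring, rpow_zero,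
    one_mul]

theorem scaledKummerM_isBigO_one (a : ℝ) (hb : ∀ k : ℕ, b + k ≠ 0) :
    scaledKummerM a b =O[atTop] fun _ => (1 : ℝ) := by
  obtain ⟨n, hn⟩ := exists_nat_ge (max (-a) (b - a))
  obtain ⟨h0, hbn⟩ := max_le_iff.1 hn
  have hlarge : scaledKummerM (a + n) b =O[atTop] fun _ => (1 : ℝ) :=
    scaledKummerM_isBigO_one_of_le hb (by linarith) (by linarith)
  clear hn h0 hbn
  induction n with
  | zero => simpa using hlarge
  | succ n ih =>
    rw [Nat.cast_succ, ← add_assoc] at hlarge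
    obtain ⟨C, hC⟩ := exists_scaledKummerM_sub_isBigO_of_isBigO_one hlarge
    exact ih ((tendsto_of_sub_isBigO_rpow neg_one_lt_zero hC).isBigO_one ℝ)

theorem exists_scaledKummerM_sub_isBigO_inv (a : ℝ) (hb : ∀ k : ℕ, b + k ≠ 0) :
    ∃ C, (fun z => scaledKummerM a b z - C) =O[atTop] fun z => z ^ (-1 : ℝ) :=
  exists_scaledKummerM_sub_isBigO_of_isBigO_one (scaledKummerM_isBigO_one (a + 1) hb)

theorem tendsto_scaledKummerM_add_one_sub (a : ℝ) (hb : ∀ k : ℕ, b + k ≠ 0) :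
    Tendsto (fun z => scaledKummerM (a + 1) b z - (b - (a + 1)) * scaledKummerM a b z)
      atTop (𝓝 0) := by
  have hinv (a : ℝ) : Tendsto (fun z => z⁻¹ * scaledKummerM a b z) atTop (𝓝 0) :=
    (((isBigO_refl _ _).mul (scaledKummerM_isBigO_one a hb)).trans_tendsto
      (by simpa using tendsto_inv_atTop_zero))
  have hlim := ((hinv (a + 1)).const_mul (2 * (a + 1) - b)).sub
    ((tendsto_inv_atTop_zero.mul (hinv (a + 1 + 1))).const_mul (a + 1))
  simp only [mul_zero, sub_zero] at hlim
  refine hlim.congr' ?_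
  filter_upwards [eventually_gt_atTop 0] with z hz
  have hrel := kummerM_neg_contiguous (a + 1) hb z
  rw [add_sub_cancel_right] at hrel
  simp only [scaledKummerM, rpow_add_one hz.ne']
  field_simp
  linear_combination hrel

theorem tendsto_scaledKummerM_add_nat_zero_iff (hb : ∀ k : ℕ, b + k ≠ 0) {n : ℕ}
    (hn : ∀ k < n, b ≠ a + (k + 1)) :
    Tendsto (scaledKummerM (a + n) b) atTop (𝓝 0) ↔ Tendsto (scaledKummerM a b) atTop (𝓝 0) := by
  induction n with
  | zero => simp
  | succ n ih =>
    have hdiff := tendsto_scaledKummerM_add_one_sub (a + n) hb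
    have hne : b - (a + n + 1) ≠ 0 := by
      rw [add_assoc]; exact sub_ne_zero.2 (hn n n.lt_succ_self)
    rw [← ih fun k hk => hn k (hk.trans n.lt_succ_self), Nat.cast_succ, ← add_assoc]
    refine ⟨fun h => ?_, fun h => ?_⟩
    · simpa [hne] using (h.sub hdiff).const_mul (b - (a + n + 1))⁻¹
    · simpa using hdiff.add (h.const_mul (b - (a + n + 1)))

theorem not_tendsto_scaledKummerM_zero_of_neg_one_lt (hb : 0 < b) (ha : -1 < a) (ha' : a ≤ 0) :
    ¬Tendsto (scaledKummerM a b) atTop (𝓝 0) := by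
  intro hzero
  obtain ⟨C, hC⟩ := exists_scaledKummerM_sub_isBigO_inv (b := b) a fun k => by positivity
  obtain rfl := tendsto_nhds_unique (tendsto_of_sub_isBigO_rpow neg_one_lt_zero hC) hzero
  have hM : (fun z => kummerM a b (-z) - 0) =O[atTop] fun z => z ^ (-a + -1) := by
    refine ((isBigO_refl (fun z : ℝ => z ^ (-a)) atTop).mul hC).congr' ?_ ?_
    all_goals filter_upwards [eventually_gt_atTop 0] with z hz
    · rw [scaledKummerM, sub_zero, sub_zero, ← mul_assoc, ← rpow_add hz]
      simp
    · rw [rpow_add hz]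
  refine zero_lt_one.not_ge (ge_of_tendsto (tendsto_of_sub_isBigO_rpow (by linarith) hM) ?_)
  filter_upwards [eventually_ge_atTop 0] with z hz
  exact one_le_kummerM_neg hb ha' hz

theorem not_tendsto_scaledKummerM_zero (hb : 0 < b) (hab : ∀ k : ℕ, a ≠ b + k) :
    ¬Tendsto (scaledKummerM a b) atTop (𝓝 0) := by
  have hb' : ∀ k : ℕ, b + k ≠ 0 := fun k => by positivity
  have hlt : -1 < a - ⌈a⌉ := by linarith [Int.ceil_lt_add_one a]
  have hle : a - ⌈a⌉ ≤ 0 := by linarith [Int.le_ceil a]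
  have hbase := not_tendsto_scaledKummerM_zero_of_neg_one_lt hb hlt hle
  obtain ⟨n, hn | hn⟩ := Int.eq_nat_or_neg ⌈a⌉
  · have hna : a - ⌈a⌉ + n = a := by simp [hn]
    rwa [← tendsto_scaledKummerM_add_nat_zero_iff (n := n) hb', hna] at hbase
    intro k hk hbk
    refine hab (n - (k + 1)) ?_
    push_cast [Nat.cast_sub hk]
    linarith
  · have hna : a + n = a - ⌈a⌉ := by simp [hn]
    rwa [← hna, tendsto_scaledKummerM_add_nat_zero_iff hb'] at hbase
    intro k hk hbk
    have : (k + 1 : ℝ) ≤ n := by exact_mod_cast hk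
    linarith

theorem exists_ne_zero_scaledKummerM_sub_isBigO_inv (hb : 0 < b) (hab : ∀ k : ℕ, a ≠ b + k) :
    ∃ C ≠ 0, (fun z => scaledKummerM a b z - C) =O[atTop] fun z => z ^ (-1 : ℝ) := by
  obtain ⟨C, hC⟩ := exists_scaledKummerM_sub_isBigO_inv (b := b) a fun k => by positivity
  refine ⟨C, ?_, hC⟩
  rintro rfl
  exact not_tendsto_scaledKummerM_zero hb hab (tendsto_of_sub_isBigO_rpow neg_one_lt_zero hC)

end scaledKummerM

theorem exists_ne_zero_rpow_mul_kummerM_neg_sq_sub_isBigO {a b : ℝ} (hb : 0 < b)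
    (hab : ∀ k : ℕ, a ≠ b + k) :
    ∃ C ≠ 0, (fun x => x ^ (2 * a) * kummerM a b (-(x ^ 2 / 2)) - C) =O[atTop]
      fun x => x ^ (-2 : ℝ) := by
  obtain ⟨C, hC, hO⟩ := exists_ne_zero_scaledKummerM_sub_isBigO_inv hb hab
  have hsq : Tendsto (fun x : ℝ => x ^ 2 / 2) atTop atTop :=
    (tendsto_pow_atTop two_ne_zero).atTop_div_const zero_lt_two
  refine ⟨2 ^ a * C, by positivity, ?_⟩
  refine (((hO.comp_tendsto hsq).const_mul_left (2 ^ a)).congr' ?_ ?_).trans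
    (isBigO_const_mul_self 2 _ _)
  all_goals filter_upwards [eventually_gt_atTop 0] with x hx
  · have hpow : x ^ (2 * a) = 2 ^ a * (x ^ 2 / 2) ^ a := by
      rw [rpow_mul hx.le, rpow_two, ← mul_rpow zero_le_two (by positivity),
        mul_div_cancel₀ _ two_ne_zero]
    rw [Function.comp_apply, scaledKummerM, hpow]
    ring
  · rw [Function.comp_apply, rpow_neg_one, inv_div, rpow_neg hx.le, rpow_two, div_eq_mul_inv]

section AscPochhammer

variable {𝕜 : Type*} [Field 𝕜] [CharZero 𝕜]

theorem prod_range_add_two_mul (q : 𝕜) (n : ℕ) :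
    ∏ k ∈ Finset.range n, (q + 2 * k) = 2 ^ n * (ascPochhammer 𝕜 n).eval (q / 2) := by
  induction n with
  | zero => simp
  | succ n ih => rw [Finset.prod_range_succ, ih, ascPochhammer_succ_eval, pow_succ]; ring

theorem factorial_two_mul_eq_ascPochhammer (n : ℕ) :
    ((2 * n)! : 𝕜) = 4 ^ n * n ! * (ascPochhammer 𝕜 n).eval (1 / 2) := by
  induction n with
  | zero => simp
  | succ n ih =>
    rw [Nat.mul_succ, Nat.factorial_succ, Nat.factorial_succ, Nat.factorial_succ,
      ascPochhammer_succ_eval]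
    push_cast
    rw [ih]
    ring

theorem factorial_two_mul_add_one_eq_ascPochhammer (n : ℕ) :
    ((2 * n + 1)! : 𝕜) = 4 ^ n * n ! * (ascPochhammer 𝕜 n).eval (3 / 2) := by
  induction n with
  | zero => simp
  | succ n ih =>
    rw [Nat.mul_succ, Nat.add_right_comm, Nat.factorial_succ, Nat.factorial_succ (2 * n + 1),
      Nat.factorial_succ n, ascPochhammer_succ_eval]
    push_cast
    rw [ih]
    ring

end AscPochhammer

theorem LamE_eq_kummerM (p x : ℝ) :
    LamE p x = 1 / √(2 * π) * kummerM ((p + 1) / 2) (1 / 2) (-(x ^ 2 / 2)) := by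
  rw [LamE, kummerM]
  congr 1
  refine tsum_congr fun n => ?_
  simp only [add_right_comm p _ 1]
  rw [prod_range_add_two_mul, factorial_two_mul_eq_ascPochhammer, pochhammerRatio,
    show -(x ^ 2 / 2) = -1 * x ^ 2 / 2 by ring, div_pow, mul_pow, ← pow_mul,
    show (4 : ℝ) = 2 * 2 by norm_num, mul_pow]
  have := (ascPochhammer_pos n (1 / 2 : ℝ) (by norm_num)).ne'
  field_simp

theorem LamO_eq_kummerM (p x : ℝ) :
    LamO p x = 1 / √(2 * π) * (x * kummerM ((p + 2) / 2) (3 / 2) (-(x ^ 2 / 2))) := by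
  rw [LamO, kummerM, ← tsum_mul_left (a := x)]
  congr 1
  refine tsum_congr fun n => ?_
  have hfactor (k : ℕ) : p + 2 * ((k : ℝ) + 1) = p + 2 + 2 * k := by ring
  simp only [hfactor]
  rw [prod_range_add_two_mul, factorial_two_mul_add_one_eq_ascPochhammer, pochhammerRatio,
    show -(x ^ 2 / 2) = -1 * x ^ 2 / 2 by ring, div_pow, mul_pow, ← pow_mul,
    show (4 : ℝ) = 2 * 2 by norm_num, mul_pow]
  have := (ascPochhammer_pos n (3 / 2 : ℝ) (by norm_num)).ne'
  field_simp
  ring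

/-- Asymptotics of the kernels: if `p` is not a nonnegative even integer then
`Λ^e_p(x) = C₁ x^{-p-1}(1 + O(x^{-2}))` as `x → +∞` for some nonzero constant `C₁`,
i.e. `x^{p+1} Λ^e_p(x) - C₁ = O(x^{-2})`; likewise for `Λ^o_p` when `p` is not a
nonnegative odd integer. -/
theorem stmt_4 (p : ℝ) :
    ((∀ n : ℕ, p ≠ 2 * n) → ∃ C₁ : ℝ, C₁ ≠ 0 ∧
      (fun x : ℝ => x ^ (p + 1) * LamE p x - C₁) =O[atTop] fun x : ℝ => x ^ (-2 : ℝ)) ∧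
    ((∀ n : ℕ, p ≠ 2 * n + 1) → ∃ C₂ : ℝ, C₂ ≠ 0 ∧
      (fun x : ℝ => x ^ (p + 1) * LamO p x - C₂) =O[atTop] fun x : ℝ => x ^ (-2 : ℝ)) := by
  refine ⟨fun hp => ?_, fun hp => ?_⟩
  · obtain ⟨C, hC, hO⟩ := exists_ne_zero_rpow_mul_kummerM_neg_sq_sub_isBigO
      (a := (p + 1) / 2) (b := 1 / 2) (by norm_num) fun k hk => hp k (by linarith)
    refine ⟨1 / √(2 * π) * C, by positivity,
      (hO.const_mul_left (1 / √(2 * π))).congr_left fun x => ?_⟩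
    rw [LamE_eq_kummerM, mul_div_cancel₀ _ two_ne_zero]
    ring
  · obtain ⟨C, hC, hO⟩ := exists_ne_zero_rpow_mul_kummerM_neg_sq_sub_isBigO
      (a := (p + 2) / 2) (b := 3 / 2) (by norm_num) fun k hk => hp k (by linarith)
    refine ⟨1 / √(2 * π) * C, by positivity,
      (hO.const_mul_left (1 / √(2 * π))).congr' ?_ .rfl⟩
    filter_upwards [eventually_gt_atTop 0] with x hx
    rw [LamO_eq_kummerM, mul_div_cancel₀ _ two_ne_zero, ← one_add_one_eq_two, ← add_assoc,
      rpow_add_one hx.ne']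
    ring
end

section
/- Let a and p be real numbers with a ≠ 0, and let h : ℝ → ℝ be a twice differentiable function satisfying h''(x) + a² x h'(x) + a² p h(x) = 0 for all real x. Then h(x) = √(2π) h(0) Λ^e_{p-1}(ax) + (√(2π) h'(0)/a) Λ^o_{p-1}(ax) for all x. In particular, if h is even then h(x) = √(2π) h(0) Λ^e_{p-1}(ax), and if h is odd then h(x) = (√(2π) h'(0)/a) Λ^o_{p-1}(ax). -/
open MeasureTheory Filter Real

/-!
The series `∑ cₙ xⁿ / n!` solves `y'' + b x y' + d y = 0` exactly when `cₙ₊₂ = -(b n + d) cₙ`, and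
such coefficients grow slowly enough for the series to converge everywhere. A linear equation with
continuous coefficients determines its solution from `y(0) = c₀` and `y'(0) = c₁`, so every solution
is such a series. For `b = a²` and `d = a² p` its even and odd halves are multiples of the two
kernels at `a x`.
-/

section Uniqueness

variable {E : Type*} [NormedAddCommGroup E] [NormedSpace ℝ E]

theorem eq_of_hasDerivAt_clm_apply {A : ℝ → E →L[ℝ] E} (hA : Continuous A) {f g : ℝ → E} {t₀ : ℝ}
    (hf : ∀ t, HasDerivAt f (A t (f t)) t) (hg : ∀ t, HasDerivAt g (A t (g t)) t)
    (h₀ : f t₀ = g t₀) : f = g := by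
  ext t
  obtain ⟨l, u, ht, ht₀⟩ : ∃ l u, t ∈ Set.Ioo l u ∧ t₀ ∈ Set.Ioo l u :=
    ⟨min t t₀ - 1, max t t₀ + 1, by grind, by grind⟩
  obtain ⟨K, hK⟩ := (isCompact_Icc (a := l) (b := u)).bddAbove_image hA.nnnorm.continuousOn
  have hLip : ∀ s ∈ Set.Ioo l u, LipschitzOnWith K (A s) Set.univ := fun s hs ↦
    ((A s).lipschitz.weaken
      (hK (Set.mem_image_of_mem _ (Set.Ioo_subset_Icc_self hs)))).lipschitzOnWith
  exact ODE_solution_unique_of_mem_Ioo hLip ht₀ (fun s _ ↦ ⟨hf s, Set.mem_univ _⟩)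
    (fun s _ ↦ ⟨hg s, Set.mem_univ _⟩) h₀ ht

theorem eq_of_hasDerivAt_of_hasDerivAt_linear {α β : ℝ → ℝ} (hα : Continuous α) (hβ : Continuous β)
    {f f' g g' : ℝ → E} {t₀ : ℝ}
    (hf : ∀ t, HasDerivAt f (f' t) t) (hf' : ∀ t, HasDerivAt f' (α t • f' t + β t • f t) t)
    (hg : ∀ t, HasDerivAt g (g' t) t) (hg' : ∀ t, HasDerivAt g' (α t • g' t + β t • g t) t)
    (h₀ : f t₀ = g t₀) (h₀' : f' t₀ = g' t₀) : f = g := by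
  let fst := ContinuousLinearMap.fst ℝ E E
  let snd := ContinuousLinearMap.snd ℝ E E
  have hA : Continuous fun t ↦ snd.prod (α t • snd + β t • fst) :=
    (ContinuousLinearMap.prodₗᵢ ℝ).continuous.comp
      (continuous_const.prodMk (f := fun _ ↦ snd) (by fun_prop))
  have hfg : (fun t ↦ (f t, f' t)) = fun t ↦ (g t, g' t) :=
    eq_of_hasDerivAt_clm_apply hA (fun t ↦ (hf t).prodMk (hf' t))
      (fun t ↦ (hg t).prodMk (hg' t)) (Prod.ext h₀ h₀')
  exact funext fun t ↦ congrArg Prod.fst (congrFun hfg t)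

end Uniqueness

theorem summable_of_norm_add_two_le {E : Type*} [SeminormedAddCommGroup E] [CompleteSpace E]
    {f : ℕ → E} {r : ℝ} (hr : r < 1) (hf : ∀ᶠ n in atTop, ‖f (n + 2)‖ ≤ r * ‖f n‖) :
    Summable f := by
  have h_even : Summable fun n ↦ f (2 * n) :=
    summable_of_ratio_norm_eventually_le hr
      ((tendsto_id.const_mul_atTop' two_pos).eventually hf)
  have h_odd : Summable fun n ↦ f (2 * n + 1) :=
    summable_of_ratio_norm_eventually_le hr
      (((tendsto_add_atTop_nat 1).comp (tendsto_id.const_mul_atTop' two_pos)).eventually hf)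
  exact h_even.even_add_odd h_odd

section ExponentialGeneratingFunction

variable {𝕜 : Type*} [RCLike 𝕜]

/-- The `n`-th term `cₙ xⁿ / n!` of the exponential generating function of `c`. -/
noncomputable def egfTerm (c : ℕ → 𝕜) (x : 𝕜) (n : ℕ) : 𝕜 :=
  c n * x ^ n / (n.factorial : 𝕜)

/-- The exponential generating function `∑ cₙ xⁿ / n!` of a sequence `c`, as a function of `x`; its
value is the junk value `0` where the series diverges. -/
noncomputable def egf (c : ℕ → 𝕜) (x : 𝕜) : 𝕜 :=
  ∑' n : ℕ, egfTerm c x n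

theorem egf_zero (c : ℕ → 𝕜) : egf c 0 = c 0 := by
  rw [egf, tsum_eq_single 0 fun n hn ↦ by simp [egfTerm, hn]]
  simp [egfTerm]

theorem egf_eq_tsum_even_add_tsum_odd {c : ℕ → 𝕜} {x : 𝕜} (hc : Summable (egfTerm c x)) :
    egf c x = ∑' n : ℕ, egfTerm c x (2 * n) + ∑' n : ℕ, egfTerm c x (2 * n + 1) :=
  (tsum_even_add_odd (hc.comp_injective (mul_right_injective₀ two_ne_zero))
    (hc.comp_injective ((add_left_injective 1).comp (mul_right_injective₀ two_ne_zero)))).symm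

theorem succ_mul_egfTerm_succ (c : ℕ → 𝕜) (x : 𝕜) (n : ℕ) :
    (n + 1 : 𝕜) * egfTerm c x (n + 1) = x * egfTerm (fun m ↦ c (m + 1)) x n := by
  have h_succ : (n + 1 : 𝕜) ≠ 0 := n.cast_add_one_ne_zero
  simp only [egfTerm, Nat.factorial_succ, Nat.cast_mul, Nat.cast_succ, pow_succ]
  field_simp

theorem hasSum_natCast_mul_egfTerm {c : ℕ → 𝕜} {x : 𝕜}
    (hc' : Summable (egfTerm (fun n ↦ c (n + 1)) x)) :
    HasSum (fun n : ℕ ↦ n * egfTerm c x n) (x * egf (fun n ↦ c (n + 1)) x) := by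
  rw [← hasSum_nat_add_iff' 1]
  simpa [succ_mul_egfTerm_succ, egf] using hc'.hasSum.mul_left x

theorem summable_egfTerm_of_succ {c : ℕ → 𝕜} {x : 𝕜}
    (hc' : Summable (egfTerm (fun n ↦ c (n + 1)) x)) : Summable (egfTerm c x) := by
  refine (hasSum_natCast_mul_egfTerm hc').summable.norm.of_norm_bounded_eventually_nat ?_
  filter_upwards [eventually_ge_atTop 1] with n hn
  rw [norm_mul, RCLike.norm_natCast]
  exact le_mul_of_one_le_left (norm_nonneg _) (mod_cast hn)

theorem norm_egfTerm_le_norm_egfTerm (c : ℕ → 𝕜) {x y : 𝕜} (hxy : ‖x‖ ≤ ‖y‖) (n : ℕ) :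
    ‖egfTerm c x n‖ ≤ ‖egfTerm c y n‖ := by
  simp only [egfTerm, norm_div, norm_mul, norm_pow]
  gcongr

theorem hasDerivAt_egfTerm_succ (c : ℕ → 𝕜) (n : ℕ) (x : 𝕜) :
    HasDerivAt (fun z ↦ egfTerm c z (n + 1)) (egfTerm (fun m ↦ c (m + 1)) x n) x := by
  refine (((hasDerivAt_pow (n + 1) x).const_mul (c (n + 1))).div_const _).congr_deriv ?_
  have h_succ : (n + 1 : 𝕜) ≠ 0 := n.cast_add_one_ne_zero
  simp only [egfTerm, Nat.factorial_succ, Nat.cast_mul, Nat.cast_succ, add_tsub_cancel_right]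
  field_simp

theorem hasDerivAt_egf {c : ℕ → 𝕜} (hc' : ∀ x, Summable (egfTerm (fun n ↦ c (n + 1)) x)) (x : 𝕜) :
    HasDerivAt (egf c) (egf (fun n ↦ c (n + 1)) x) x := by
  have h_split : egf c = fun z ↦ c 0 + ∑' n : ℕ, egfTerm c z (n + 1) := by
    ext z
    rw [egf, (summable_egfTerm_of_succ (hc' z)).tsum_eq_zero_add]
    simp [egfTerm]
  let R : ℝ := ‖x‖ + 1
  have h_bound : ∀ n, ∀ y ∈ Metric.ball (0 : 𝕜) R,
      ‖egfTerm (fun m ↦ c (m + 1)) y n‖ ≤ ‖egfTerm (fun m ↦ c (m + 1)) (R : 𝕜) n‖ := by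
    refine fun n y hy ↦ norm_egfTerm_le_norm_egfTerm _ ?_ n
    rw [RCLike.norm_ofReal]
    exact (mem_ball_zero_iff.mp hy).le.trans (le_abs_self R)
  have hx : x ∈ Metric.ball (0 : 𝕜) R := mem_ball_zero_iff.mpr (lt_add_one ‖x‖)
  rw [h_split]
  exact (hasDerivAt_tsum_of_isPreconnected (hc' R).norm Metric.isOpen_ball
    (convex_ball (0 : 𝕜) R).isPreconnected (fun n y _ ↦ hasDerivAt_egfTerm_succ c n y) h_bound hx
    ((summable_nat_add_iff 1).mpr (summable_egfTerm_of_succ (hc' x))) hx).const_add _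

theorem summable_egfTerm_of_norm_add_two_le {c : ℕ → 𝕜} {K : ℝ}
    (hc : ∀ n, ‖c (n + 2)‖ ≤ K * (n + 1) * ‖c n‖) (x : 𝕜) : Summable (egfTerm c x) := by
  refine summable_of_norm_add_two_le one_half_lt_one ?_
  filter_upwards [eventually_ge_atTop ⌈2 * K * ‖x‖ ^ 2⌉₊] with n hn
  have hKn : K * ‖x‖ ^ 2 / (n + 2) ≤ 1 / 2 := by
    rw [div_le_iff₀ (by positivity)]
    linarith [Nat.ceil_le.mp hn]
  have h_fact : ((n + 2).factorial : ℝ) = (n + 2) * (n + 1) * n.factorial := by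
    push_cast [Nat.factorial_succ]
    ring
  simp only [egfTerm, norm_div, norm_mul, norm_pow, RCLike.norm_natCast]
  calc ‖c (n + 2)‖ * ‖x‖ ^ (n + 2) / ((n + 2).factorial : ℝ)
      ≤ K * (n + 1) * ‖c n‖ * ‖x‖ ^ (n + 2) / ((n + 2).factorial : ℝ) := by gcongr; exact hc n
    _ = K * ‖x‖ ^ 2 / (n + 2) * (‖c n‖ * ‖x‖ ^ n / n.factorial) := by
        rw [h_fact, pow_add]
        field_simp
    _ ≤ 1 / 2 * (‖c n‖ * ‖x‖ ^ n / n.factorial) := by gcongr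

end ExponentialGeneratingFunction

section Coefficients

variable {R : Type*} [CommRing R] (b d y₀ y₁ : R)

/-- The Taylor coefficients at `0`, scaled by `n!`, of the solution of `y'' + b x y' + d y = 0` with
`y(0) = y₀` and `y'(0) = y₁`. -/
def odeCoeff : ℕ → R
  | 0 => y₀
  | 1 => y₁
  | n + 2 => -(b * n + d) * odeCoeff n

theorem odeCoeff_two_mul (n : ℕ) :
    odeCoeff b d y₀ y₁ (2 * n) = y₀ * ∏ k ∈ Finset.range n, -(b * (2 * k) + d) := by
  induction n with
  | zero => simp [odeCoeff]
  | succ n ih =>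
    rw [Nat.mul_succ, odeCoeff, ih, Finset.prod_range_succ]
    push_cast
    ring

theorem odeCoeff_two_mul_add_one (n : ℕ) :
    odeCoeff b d y₀ y₁ (2 * n + 1) = y₁ * ∏ k ∈ Finset.range n, -(b * (2 * k + 1) + d) := by
  induction n with
  | zero => simp [odeCoeff]
  | succ n ih =>
    rw [Nat.mul_succ, add_right_comm, odeCoeff, ih, Finset.prod_range_succ]
    push_cast
    ring

-- Differentiating `y'' + b x y' + d y = 0` yields the equation of the same shape for `y'`, with
-- `d` replaced by `b + d`.
theorem odeCoeff_succ (n : ℕ) :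
    odeCoeff b d y₀ y₁ (n + 1) = odeCoeff b (b + d) y₁ (-d * y₀) n := by
  induction n using Nat.twoStepInduction with
  | zero => simp [odeCoeff]
  | one => simp [odeCoeff]
  | more n ih _ =>
    rw [odeCoeff, odeCoeff, ih]
    push_cast
    ring

end Coefficients

section PowerSeriesSolution

variable {𝕜 : Type*} [RCLike 𝕜] (b d y₀ y₁ : 𝕜)

theorem summable_egfTerm_odeCoeff (x : 𝕜) : Summable (egfTerm (odeCoeff b d y₀ y₁) x) := by
  refine summable_egfTerm_of_norm_add_two_le (K := ‖b‖ + ‖d‖) (fun n ↦ ?_) x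
  rw [odeCoeff, norm_mul, norm_neg]
  gcongr
  calc ‖b * n + d‖ ≤ ‖b‖ * n + ‖d‖ := by
        simpa using norm_add_le (b * n) d
    _ ≤ (‖b‖ + ‖d‖) * (n + 1) := by
        nlinarith [norm_nonneg b, mul_nonneg (norm_nonneg d) n.cast_nonneg (α := ℝ)]

theorem hasDerivAt_egf_odeCoeff (x : 𝕜) :
    HasDerivAt (egf (odeCoeff b d y₀ y₁)) (egf (odeCoeff b (b + d) y₁ (-d * y₀)) x) x := by
  simp_rw [← funext (odeCoeff_succ b d y₀ y₁)]
  refine hasDerivAt_egf (fun z ↦ ?_) x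
  simp_rw [odeCoeff_succ]
  exact summable_egfTerm_odeCoeff ..

theorem egf_odeCoeff_add_two (x : 𝕜) :
    egf (fun n ↦ odeCoeff b d y₀ y₁ (n + 2)) x =
      -(b * x) * egf (odeCoeff b (b + d) y₁ (-d * y₀)) x + -d * egf (odeCoeff b d y₀ y₁) x := by
  have h_summable := summable_egfTerm_odeCoeff b d y₀ y₁ x
  have h_summable' : Summable (egfTerm (fun n ↦ odeCoeff b d y₀ y₁ (n + 1)) x) := by
    simp_rw [odeCoeff_succ]
    exact summable_egfTerm_odeCoeff ..
  have h_sum := ((hasSum_natCast_mul_egfTerm h_summable').mul_left (-b)).add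
    (h_summable.hasSum.mul_left (-d))
  simp_rw [odeCoeff_succ b d y₀ y₁] at h_sum
  rw [neg_mul, mul_assoc, ← neg_mul]
  refine Eq.trans (tsum_congr fun n ↦ ?_) h_sum.tsum_eq
  simp only [egfTerm, odeCoeff]
  ring

theorem hasDerivAt_egf_odeCoeff_deriv (x : 𝕜) :
    HasDerivAt (egf (odeCoeff b (b + d) y₁ (-d * y₀)))
      (-(b * x) * egf (odeCoeff b (b + d) y₁ (-d * y₀)) x + -d * egf (odeCoeff b d y₀ y₁) x) x := by
  rw [← egf_odeCoeff_add_two]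
  convert! hasDerivAt_egf_odeCoeff b (b + d) y₁ (-d * y₀) x using 2
  ext n
  rw [odeCoeff_succ, odeCoeff_succ]

end PowerSeriesSolution

theorem eq_egf_odeCoeff {b d : ℝ} {f f' : ℝ → ℝ} (hf : ∀ x, HasDerivAt f (f' x) x)
    (hf' : ∀ x, HasDerivAt f' (-(b * x) * f' x + -d * f x) x) :
    f = egf (odeCoeff b d (f 0) (f' 0)) :=
  eq_of_hasDerivAt_of_hasDerivAt_linear (t₀ := 0) (by fun_prop) continuous_const hf hf'
    (hasDerivAt_egf_odeCoeff b d (f 0) (f' 0)) (hasDerivAt_egf_odeCoeff_deriv b d (f 0) (f' 0))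
    (by rw [egf_zero, odeCoeff]) (by rw [egf_zero, odeCoeff])

theorem prod_range_neg_sq_mul {R : Type*} [CommRing R] (a : R) (s : ℕ → R) (n : ℕ) :
    ∏ k ∈ Finset.range n, -(a ^ 2 * s k) =
      (-1) ^ n * a ^ (2 * n) * ∏ k ∈ Finset.range n, s k := by
  simp only [Finset.prod_neg, Finset.prod_mul_distrib, Finset.prod_const, Finset.card_range,
    pow_mul, mul_assoc]

section Kernels

variable (p y₀ y₁ x : ℝ)

theorem tsum_egfTerm_odeCoeff_even (a : ℝ) :
    ∑' n : ℕ, egfTerm (odeCoeff (a ^ 2) (a ^ 2 * p) y₀ y₁) x (2 * n) =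
      √(2 * π) * y₀ * LamE (p - 1) (a * x) := by
  have h_factor (k : ℕ) : -(a ^ 2 * (2 * k) + a ^ 2 * p) = -(a ^ 2 * (p - 1 + 2 * k + 1)) := by
    ring
  calc _ = ∑' n : ℕ, y₀ * ((-1) ^ n * (∏ k ∈ Finset.range n, (p - 1 + 2 * (k : ℝ) + 1)) *
          (a * x) ^ (2 * n) / ((2 * n).factorial : ℝ)) := by
        refine tsum_congr fun n ↦ ?_
        simp_rw [egfTerm, odeCoeff_two_mul, h_factor, prod_range_neg_sq_mul, mul_pow]
        ring
    _ = √(2 * π) * y₀ * LamE (p - 1) (a * x) := by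
        rw [tsum_mul_left, LamE]
        field_simp

theorem tsum_egfTerm_odeCoeff_odd {a : ℝ} (ha : a ≠ 0) :
    ∑' n : ℕ, egfTerm (odeCoeff (a ^ 2) (a ^ 2 * p) y₀ y₁) x (2 * n + 1) =
      √(2 * π) * y₁ / a * LamO (p - 1) (a * x) := by
  have h_factor (k : ℕ) :
      -(a ^ 2 * (2 * k + 1) + a ^ 2 * p) = -(a ^ 2 * (p - 1 + 2 * (k + 1))) := by
    ring
  calc _ = ∑' n : ℕ, y₁ / a * ((-1) ^ n * (∏ k ∈ Finset.range n, (p - 1 + 2 * ((k : ℝ) + 1))) *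
          (a * x) ^ (2 * n + 1) / ((2 * n + 1).factorial : ℝ)) := by
        refine tsum_congr fun n ↦ ?_
        simp_rw [egfTerm, odeCoeff_two_mul_add_one, h_factor, prod_range_neg_sq_mul, mul_pow,
          pow_succ a (2 * n)]
        field_simp
    _ = √(2 * π) * y₁ / a * LamO (p - 1) (a * x) := by
        rw [tsum_mul_left, LamO]
        field_simp

end Kernels

theorem eq_zero_of_hasDerivAt_zero_of_even {E : Type*} [NormedAddCommGroup E] [NormedSpace ℝ E]
    {f : ℝ → E} {f' : E} (hf : HasDerivAt f f' 0) (h_even : f.Even) : f' = 0 := by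
  have h_deriv : deriv f 0 = -deriv f 0 := by
    simpa only [h_even _, neg_zero] using deriv_comp_neg f 0
  rw [← hf.deriv]
  have : IsAddTorsionFree E := .of_isTorsionFree ℝ E
  exact self_eq_neg.mp h_deriv

/-- Solutions of `h'' + a²x h' + a²p h = 0` are `√(2π)h(0) Λ^e_{p-1}(ax) + (√(2π)h'(0)/a) Λ^o_{p-1}(ax)`;
in particular even solutions are multiples of `Λ^e_{p-1}(ax)` and odd solutions are multiples of
`Λ^o_{p-1}(ax)`. -/
theorem stmt_6 (a p : ℝ) (ha : a ≠ 0) (h h' h'' : ℝ → ℝ)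
    (hd1 : ∀ x, HasDerivAt h (h' x) x) (hd2 : ∀ x, HasDerivAt h' (h'' x) x)
    (hode : ∀ x, h'' x + a ^ 2 * x * h' x + a ^ 2 * p * h x = 0) :
    (∀ x, h x = Real.sqrt (2 * Real.pi) * h 0 * LamE (p - 1) (a * x) +
      (Real.sqrt (2 * Real.pi) * h' 0 / a) * LamO (p - 1) (a * x)) ∧
    ((∀ x, h (-x) = h x) →
      ∀ x, h x = Real.sqrt (2 * Real.pi) * h 0 * LamE (p - 1) (a * x)) ∧
    ((∀ x, h (-x) = -h x) →
      ∀ x, h x = (Real.sqrt (2 * Real.pi) * h' 0 / a) * LamO (p - 1) (a * x)) := by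
  have hd2' (x : ℝ) : HasDerivAt h' (-(a ^ 2 * x) * h' x + -(a ^ 2 * p) * h x) x :=
    (hd2 x).congr_deriv (by linear_combination hode x)
  have h_general (x : ℝ) : h x = Real.sqrt (2 * Real.pi) * h 0 * LamE (p - 1) (a * x) +
      (Real.sqrt (2 * Real.pi) * h' 0 / a) * LamO (p - 1) (a * x) := by
    conv_lhs => rw [eq_egf_odeCoeff hd1 hd2']
    rw [egf_eq_tsum_even_add_tsum_odd (summable_egfTerm_odeCoeff ..), tsum_egfTerm_odeCoeff_even,
      tsum_egfTerm_odeCoeff_odd _ _ _ _ ha]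
  refine ⟨h_general, fun h_even x ↦ ?_, fun h_odd x ↦ ?_⟩
  · have h'_zero : h' 0 = 0 := eq_zero_of_hasDerivAt_zero_of_even (hd1 0) h_even
    simpa [h'_zero] using h_general x
  · have h_zero : h 0 = 0 := Function.Odd.map_zero h_odd
    simpa [h_zero] using h_general x
end

section
/- For every real p > 0 there exist nonzero real constants c and d such that for all real ω: ∫_ℝ Λ^e_p(x) e^{-iωx} dx = c |ω|^p e^{-ω²/2} and ∫_ℝ Λ^o_p(x) e^{-iωx} dx = i · d · sign(ω) |ω|^p e^{-ω²/2}. Moreover, ∫_ℝ Λ^e_0(x) e^{-iωx} dx = e^{-ω²/2} for all real ω. -/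
open MeasureTheory Filter Real

/-!
Let `F_s(x) = ∫₀^∞ t ^ s e^{-t²/2} e^{ixt} dt` and `M_s = F_s(0)`. Integration by parts gives the
recurrence `F_{s+2} = (s + 1) F_s + i x F_{s+1}`, hence `M_{s+2} = (s + 1) M_s`. Expanding `e^{ixt}`
and integrating termwise, the products in the series of `Λ^e_p` and `Λ^o_p` are therefore quotients
of moments, and `√(2π) Λ^e_p = Re F_p / M_p`, `√(2π) Λ^o_p = Im F_p / M_{p+1}`.

Thus the theorem is Fourier inversion for `t ^ p e^{-t²/2}` on the half-line, once `F_p` is known to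
be integrable. Since the weight is not smooth at `0`, the decay comes from the recurrence: as
`F_s' = i F_{s+1}`, it reads `(x ^ (p+1) F_p)' = x ^ p F_{p+2}`, while applying it twice bounds
`x² F_{p+2}`; integrating, `F_p = O(x ^ (-1-q))` for every `0 < q < min p 1`.
-/

open Set Topology ComplexConjugate

lemma rpow_le_one_add_sq {a x : ℝ} (ha : a ∈ Icc 0 2) (hx : 0 ≤ x) : x ^ a ≤ 1 + x ^ 2 := by
  rcases le_total x 1 with hx1 | hx1
  · exact (rpow_le_one hx hx1 ha.1).trans (le_add_of_nonneg_right (sq_nonneg x))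
  · calc x ^ a ≤ x ^ (2 : ℝ) := rpow_le_rpow_of_exponent_le hx1 ha.2
      _ ≤ 1 + x ^ 2 := by rw [rpow_two]; exact le_add_of_nonneg_left zero_le_one

section PowerSeries

variable {x : ℝ} {a : ℕ → ℝ} {z : ℂ}

lemma I_mul_ofReal_pow_two_mul (x : ℝ) (n : ℕ) :
    (Complex.I * x) ^ (2 * n) = ((-1) ^ n * x ^ (2 * n) : ℝ) := by
  rw [mul_pow, pow_mul, Complex.I_sq]
  push_cast
  rfl

lemma I_mul_ofReal_pow_two_mul_add_one (x : ℝ) (n : ℕ) :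
    (Complex.I * x) ^ (2 * n + 1) = Complex.I * ((-1) ^ n * x ^ (2 * n + 1) : ℝ) := by
  rw [pow_succ, I_mul_ofReal_pow_two_mul]
  push_cast
  ring

lemma hasSum_re_of_I_mul_pow (h : HasSum (fun n ↦ (Complex.I * x) ^ n * a n) z) :
    HasSum (fun n ↦ (-1) ^ n * x ^ (2 * n) * a (2 * n)) z.re := by
  have hinj : Function.Injective fun n : ℕ ↦ 2 * n := mul_right_injective₀ two_ne_zero
  refine ((hinj.hasSum_iff fun m hm ↦ ?_).2 (Complex.hasSum_re h)).congr_fun fun n ↦ ?_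
  · obtain ⟨k, rfl | rfl⟩ := m.even_or_odd'
    · exact absurd ⟨k, rfl⟩ hm
    · rw [I_mul_ofReal_pow_two_mul_add_one, mul_assoc Complex.I, ← Complex.ofReal_mul,
        Complex.I_mul_re, Complex.ofReal_im, neg_zero]
  · rw [Function.comp_apply, I_mul_ofReal_pow_two_mul, ← Complex.ofReal_mul, Complex.ofReal_re]

lemma hasSum_im_of_I_mul_pow (h : HasSum (fun n ↦ (Complex.I * x) ^ n * a n) z) :
    HasSum (fun n ↦ (-1) ^ n * x ^ (2 * n + 1) * a (2 * n + 1)) z.im := by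
  have hinj : Function.Injective fun n : ℕ ↦ 2 * n + 1 := fun m n hmn ↦ by simpa using hmn
  refine ((hinj.hasSum_iff fun m hm ↦ ?_).2 (Complex.hasSum_im h)).congr_fun fun n ↦ ?_
  · obtain ⟨k, rfl | rfl⟩ := m.even_or_odd'
    · rw [I_mul_ofReal_pow_two_mul, ← Complex.ofReal_mul, Complex.ofReal_im]
    · exact absurd ⟨k, rfl⟩ hm
  · rw [Function.comp_apply, I_mul_ofReal_pow_two_mul_add_one, mul_assoc Complex.I,
      ← Complex.ofReal_mul, Complex.I_mul_im, Complex.ofReal_re]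

end PowerSeries

section OscillatoryIntegral

variable {μ : Measure ℝ} {f : ℝ → ℂ}

lemma norm_exp_I_mul_mul (x t : ℝ) : ‖Complex.exp (Complex.I * x * t)‖ = 1 := by
  rw [mul_assoc, ← Complex.ofReal_mul, Complex.norm_exp_I_mul_ofReal]

lemma integrable_mul_exp_I (hf : Integrable f μ) (x : ℝ) :
    Integrable (fun t ↦ f t * Complex.exp (Complex.I * x * t)) μ :=
  hf.mul_bdd (c := 1) (Continuous.aestronglyMeasurable (by fun_prop))
    (.of_forall fun t ↦ (norm_exp_I_mul_mul x t).le)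

lemma hasDerivAt_integral_mul_exp_I (hf : Integrable f μ)
    (hf' : Integrable (fun t ↦ t * f t) μ) (x : ℝ) :
    HasDerivAt (fun x : ℝ ↦ ∫ t, f t * Complex.exp (Complex.I * x * t) ∂μ)
      (Complex.I * ∫ t, t * f t * Complex.exp (Complex.I * x * t) ∂μ) x := by
  have hderiv (t y : ℝ) :
      HasDerivAt (fun y : ℝ ↦ f t * Complex.exp (Complex.I * y * t))
        (Complex.I * (t * f t * Complex.exp (Complex.I * y * t))) y := by
    have hexp := ((((hasDerivAt_id y).ofReal_comp).const_mul Complex.I).mul_const (t : ℂ)).cexp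
    refine (hexp.const_mul (f t)).congr_deriv ?_
    simp only [id, Complex.ofReal_one]
    ring
  rw [← integral_const_mul]
  refine (hasDerivAt_integral_of_dominated_loc_of_deriv_le (bound := fun t ↦ ‖t * f t‖) univ_mem
    (.of_forall fun y ↦ (integrable_mul_exp_I hf y).aestronglyMeasurable)
    (integrable_mul_exp_I hf x)
    ((integrable_mul_exp_I hf' x).const_mul Complex.I).aestronglyMeasurable
    (.of_forall fun t y _ ↦ ?_) hf'.norm (.of_forall fun t y _ ↦ hderiv t y)).2
  rw [norm_mul, Complex.norm_I, one_mul, norm_mul, norm_exp_I_mul_mul, mul_one]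

lemma hasSum_integral_mul_pow_div_factorial (hf : AEStronglyMeasurable f μ) {x : ℝ}
    (hfx : Integrable (fun t ↦ ‖f t‖ * exp |x * t|) μ) :
    HasSum (fun n : ℕ ↦ ∫ t, f t * ((Complex.I * x * t) ^ n / n.factorial) ∂μ)
      (∫ t, f t * Complex.exp (Complex.I * x * t) ∂μ) := by
  have hasSum_bound (t : ℝ) :
      HasSum (fun n : ℕ ↦ ‖f t‖ * (|x * t| ^ n / n.factorial)) (‖f t‖ * exp |x * t|) := by
    rw [exp_eq_exp_ℝ]
    exact (NormedSpace.expSeries_div_hasSum_exp |x * t|).mul_left _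
  refine hasSum_integral_of_dominated_convergence
    (fun n t ↦ ‖f t‖ * (|x * t| ^ n / n.factorial))
    (fun n ↦ hf.mul (Continuous.aestronglyMeasurable (by fun_prop)))
    (fun n ↦ .of_forall fun t ↦ ?_) (.of_forall fun t ↦ (hasSum_bound t).summable) ?_
    (.of_forall fun t ↦ ?_)
  · simp [abs_mul]
  · simpa only [(hasSum_bound _).tsum_eq] using hfx
  · rw [Complex.exp_eq_exp_ℂ]
    exact (NormedSpace.expSeries_div_hasSum_exp (Complex.I * x * t)).mul_left _

open FourierTransform in
lemma integral_integral_mul_exp_I_mul_exp_neg_I (hfc : Continuous f) (hf : Integrable f)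
    (hf' : Integrable fun x : ℝ ↦ ∫ t, f t * Complex.exp (Complex.I * x * t)) (ω : ℝ) :
    ∫ x : ℝ, (∫ t, f t * Complex.exp (Complex.I * x * t)) * Complex.exp (-(Complex.I * ω * x)) =
      2 * π * f ω := by
  set g : ℝ → ℂ := fun x ↦ ∫ t, f t * Complex.exp (Complex.I * x * t) with hg
  have fourier_eq : 𝓕 f = fun w ↦ g (-(2 * π) * w) := by
    ext w
    rw [Real.fourier_eq', hg]
    refine integral_congr_ae (.of_forall fun t ↦ ?_)
    simp only [smul_eq_mul, RCLike.inner_apply, conj_trivial]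
    rw [mul_comm]
    push_cast
    ring_nf
  have integrable_fourier : Integrable (𝓕 f) := by
    rw [fourier_eq]
    exact hf'.comp_mul_left' (neg_ne_zero.2 two_pi_pos.ne')
  have change_of_variables := Measure.integral_comp_mul_left
    (fun x : ℝ ↦ g x * Complex.exp (-(Complex.I * ω * x))) (-(2 * π))
  have inversion : ∫ v : ℝ, g (-(2 * π) * v) *
      Complex.exp (-(Complex.I * ω * (-(2 * π) * v : ℝ))) = f ω := by
    rw [← congrFun (hfc.fourierInv_fourier_eq hf integrable_fourier) ω, Real.fourierInv_eq',
      fourier_eq]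
    refine integral_congr_ae (.of_forall fun v ↦ ?_)
    simp only [smul_eq_mul, RCLike.inner_apply, conj_trivial]
    rw [mul_comm]
    push_cast
    ring_nf
  rw [← inversion, change_of_variables, abs_inv, abs_neg, abs_of_pos two_pi_pos,
    Complex.real_smul, ← mul_assoc]
  push_cast
  rw [mul_inv_cancel₀ (mod_cast two_pi_pos.ne'), one_mul]

end OscillatoryIntegral

/-- The weight `t ^ s * exp (-t² / 2)`, whose even and odd extensions from the half-line `t > 0` are
the Fourier transforms of the kernels up to constants. It is only meant to be evaluated at `t ≥ 0`,
`Real.rpow` having no useful value at a negative base. -/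
noncomputable def rpowGauss (s t : ℝ) : ℝ := t ^ s * exp (-(1 / 2) * t ^ 2)

/-- The half-line moments `∫₀^∞ t ^ s * exp (-t² / 2) dt`, which generate the coefficients of the
power series of the kernels. The integral converges for `s > -1`. -/
noncomputable def gaussMoment (s : ℝ) : ℝ := ∫ t in Ioi 0, rpowGauss s t

/-- The half-line Fourier integral `∫₀^∞ t ^ s * exp (-t² / 2) * exp (i x t) dt`, whose real and
imaginary parts are multiples of `LamE s` and `LamO s`. The integral converges for `s > -1`. -/
noncomputable def gaussFourier (s x : ℝ) : ℂ :=
  ∫ t in Ioi 0, (rpowGauss s t : ℂ) * Complex.exp (Complex.I * x * t)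

section Weight

variable {s t : ℝ}

lemma rpowGauss_pos (ht : 0 < t) : 0 < rpowGauss s t := by
  unfold rpowGauss; positivity

lemma rpowGauss_add_natCast (ht : 0 < t) (n : ℕ) :
    rpowGauss (s + n) t = rpowGauss s t * t ^ n := by
  rw [rpowGauss, rpowGauss, rpow_add_natCast ht.ne']
  ring

lemma rpowGauss_zero_right (hs : s ≠ 0) : rpowGauss s 0 = 0 := by
  rw [rpowGauss, zero_rpow hs, zero_mul]

lemma continuous_rpowGauss (hs : 0 ≤ s) : Continuous (rpowGauss s) :=
  (continuous_rpow_const hs).mul (by fun_prop)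

lemma rpowGauss_abs (s t : ℝ) : rpowGauss s |t| = |t| ^ s * exp (-t ^ 2 / 2) := by
  rw [rpowGauss, sq_abs]
  ring_nf

lemma measurable_rpowGauss : Measurable (rpowGauss s) := by
  unfold rpowGauss; fun_prop

lemma tendsto_rpowGauss_atTop : Tendsto (rpowGauss s) atTop (𝓝 0) :=
  (rpow_mul_exp_neg_mul_sq_isLittleO_exp_neg one_half_pos s).trans_tendsto
    (tendsto_exp_atBot.comp (tendsto_id.const_mul_atTop_of_neg (by norm_num)))

lemma hasDerivAt_rpowGauss (ht : 0 < t) :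
    HasDerivAt (rpowGauss (s + 1)) ((s + 1) * rpowGauss s t - rpowGauss (s + 2) t) t := by
  have hgauss : HasDerivAt (fun t ↦ exp (-(1 / 2) * t ^ 2)) (exp (-(1 / 2) * t ^ 2) * -t) t := by
    simpa using ((hasDerivAt_pow 2 t).const_mul (-(1 / 2 : ℝ))).exp
  refine ((hasDerivAt_rpow_const (.inl ht.ne')).mul hgauss).congr_deriv ?_
  rw [rpowGauss, rpowGauss, add_sub_cancel_right, rpow_add ht, rpow_add ht, rpow_one, rpow_two]
  ring

lemma integrableOn_rpowGauss (hs : -1 < s) : IntegrableOn (rpowGauss s) (Ioi 0) :=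
  integrableOn_rpow_mul_exp_neg_mul_sq one_half_pos hs

lemma integrableOn_rpowGauss_mul_exp_abs (hs : -1 < s) (x : ℝ) :
    IntegrableOn (fun t ↦ rpowGauss s t * exp |x * t|) (Ioi 0) := by
  have hdom := (integrableOn_rpow_mul_exp_neg_mul_sq (b := 1 / 4) (by norm_num) hs).const_mul
    (exp (x ^ 2))
  refine Integrable.mono' hdom (measurable_rpowGauss.mul (by fun_prop)).aestronglyMeasurable
    (ae_restrict_of_forall_mem measurableSet_Ioi fun t (ht : 0 < t) ↦ ?_)
  have hexponent : -(1 / 2) * t ^ 2 + |x * t| ≤ x ^ 2 + -(1 / 4) * t ^ 2 := by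
    rw [abs_mul]
    nlinarith [sq_nonneg (|x| - |t| / 2), sq_abs x, sq_abs t]
  rw [norm_of_nonneg (mul_nonneg (rpowGauss_pos ht).le (exp_pos _).le)]
  calc rpowGauss s t * exp |x * t| = t ^ s * exp (-(1 / 2) * t ^ 2 + |x * t|) := by
        rw [rpowGauss, exp_add, mul_assoc]
    _ ≤ t ^ s * exp (x ^ 2 + -(1 / 4) * t ^ 2) := by gcongr
    _ = exp (x ^ 2) * (t ^ s * exp (-(1 / 4) * t ^ 2)) := by rw [exp_add]; ring

lemma gaussMoment_pos (hs : -1 < s) : 0 < gaussMoment s := by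
  have hsupport : Ioi 0 ⊆ Function.support (rpowGauss s) := fun t ht ↦ (rpowGauss_pos ht).ne'
  rw [gaussMoment, setIntegral_pos_iff_support_of_nonneg_ae
    (ae_restrict_of_forall_mem measurableSet_Ioi fun t ht ↦ (rpowGauss_pos ht).le)
    (integrableOn_rpowGauss hs), inter_eq_self_of_subset_right hsupport, volume_Ioi]
  exact ENNReal.zero_lt_top

end Weight

section Transform

variable {s : ℝ}

lemma integrableOn_rpowGauss_mul_exp_I (hs : -1 < s) (x : ℝ) :
    IntegrableOn (fun t ↦ (rpowGauss s t : ℂ) * Complex.exp (Complex.I * x * t)) (Ioi 0) :=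
  integrable_mul_exp_I (integrableOn_rpowGauss hs).ofReal x

lemma norm_gaussFourier_le (hs : -1 < s) (x : ℝ) : ‖gaussFourier s x‖ ≤ gaussMoment s := by
  refine norm_integral_le_of_norm_le (integrableOn_rpowGauss hs)
    (ae_restrict_of_forall_mem measurableSet_Ioi fun t ht ↦ ?_)
  rw [norm_mul, norm_exp_I_mul_mul, mul_one, Complex.norm_of_nonneg (rpowGauss_pos ht).le]

lemma gaussFourier_zero_right : gaussFourier s 0 = gaussMoment s := by
  simp only [gaussFourier, gaussMoment, Complex.ofReal_zero, mul_zero, zero_mul, Complex.exp_zero,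
    mul_one, integral_complex_ofReal]

lemma gaussFourier_neg (x : ℝ) : gaussFourier s (-x) = conj (gaussFourier s x) := by
  rw [gaussFourier, gaussFourier, ← integral_conj]
  simp [← Complex.exp_conj]

lemma hasDerivAt_rpowGauss_mul_exp_I (x : ℝ) {t : ℝ} (ht : 0 < t) :
    HasDerivAt (fun t ↦ (rpowGauss (s + 1) t : ℂ) * Complex.exp (Complex.I * x * t))
      ((s + 1) * (rpowGauss s t * Complex.exp (Complex.I * x * t)) +
        Complex.I * x * (rpowGauss (s + 1) t * Complex.exp (Complex.I * x * t)) -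
        rpowGauss (s + 2) t * Complex.exp (Complex.I * x * t)) t := by
  have hexp := ((hasDerivAt_id t).ofReal_comp.const_mul (Complex.I * x)).cexp
  refine ((hasDerivAt_rpowGauss ht).ofReal_comp.mul hexp).congr_deriv ?_
  simp only [id]
  push_cast
  ring

lemma tendsto_rpowGauss_mul_exp_I_atTop (x : ℝ) :
    Tendsto (fun t : ℝ ↦ (rpowGauss s t : ℂ) * Complex.exp (Complex.I * x * t)) atTop (𝓝 0) := by
  rw [tendsto_zero_iff_norm_tendsto_zero]
  simpa only [norm_mul, norm_exp_I_mul_mul, mul_one, Complex.norm_real] using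
    tendsto_zero_iff_norm_tendsto_zero.1 (tendsto_rpowGauss_atTop (s := s))

lemma gaussFourier_add_two (hs : -1 < s) (x : ℝ) :
    gaussFourier (s + 2) x =
      (s + 1) * gaussFourier s x + Complex.I * x * gaussFourier (s + 1) x := by
  have hint₀ := (integrableOn_rpowGauss_mul_exp_I hs x).const_mul (s + 1 : ℂ)
  have hint₁ := (integrableOn_rpowGauss_mul_exp_I (s := s + 1) (by linarith) x).const_mul
    (Complex.I * x)
  have hint₂ := integrableOn_rpowGauss_mul_exp_I (s := s + 2) (by linarith) x
  have hcont : ContinuousWithinAt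
      (fun t ↦ (rpowGauss (s + 1) t : ℂ) * Complex.exp (Complex.I * x * t)) (Ici 0) 0 := by
    have := continuous_rpowGauss (s := s + 1) (by linarith)
    exact Continuous.continuousWithinAt (by fun_prop)
  have integral_deriv_eq_zero := integral_Ioi_of_hasDerivAt_of_tendsto hcont
    (fun t ht ↦ hasDerivAt_rpowGauss_mul_exp_I x ht) ((hint₀.add hint₁).sub hint₂)
    (tendsto_rpowGauss_mul_exp_I_atTop x)
  rw [rpowGauss_zero_right (by linarith), Complex.ofReal_zero, zero_mul,
    integral_sub (hint₀.fun_add hint₁) hint₂, integral_add hint₀ hint₁, integral_const_mul,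
    integral_const_mul] at integral_deriv_eq_zero
  simp only [gaussFourier]
  linear_combination -integral_deriv_eq_zero

lemma gaussMoment_add_two (hs : -1 < s) : gaussMoment (s + 2) = (s + 1) * gaussMoment s := by
  have h := gaussFourier_add_two hs 0
  simp only [gaussFourier_zero_right, Complex.ofReal_zero, mul_zero, zero_mul, add_zero] at h
  exact_mod_cast h

lemma gaussMoment_add_two_mul (hs : -1 < s) (n : ℕ) :
    gaussMoment (s + (2 * n : ℕ)) = (∏ k ∈ Finset.range n, (s + 2 * k + 1)) * gaussMoment s := by
  induction n with
  | zero => simp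
  | succ n ih =>
    rw [show s + (2 * (n + 1) : ℕ) = s + (2 * n : ℕ) + 2 by push_cast; ring,
      gaussMoment_add_two (by linarith [(2 * n : ℕ).cast_nonneg (α := ℝ)]), ih,
      Finset.prod_range_succ]
    push_cast
    ring

lemma hasDerivAt_gaussFourier (hs : -1 < s) (x : ℝ) :
    HasDerivAt (gaussFourier s) (Complex.I * gaussFourier (s + 1) x) x := by
  have hmul {t : ℝ} (ht : t ∈ Ioi 0) : (rpowGauss (s + 1) t : ℂ) = t * rpowGauss s t := by
    rw [← Nat.cast_one, rpowGauss_add_natCast ht, pow_one, Complex.ofReal_mul, mul_comm]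
  have hint : IntegrableOn (fun t ↦ (rpowGauss (s + 1) t : ℂ)) (Ioi 0) :=
    (integrableOn_rpowGauss (by linarith)).ofReal
  refine (hasDerivAt_integral_mul_exp_I (integrableOn_rpowGauss hs).ofReal
    (hint.congr_fun (fun t ht ↦ hmul ht) measurableSet_Ioi) x).congr_deriv ?_
  exact congrArg _ (setIntegral_congr_fun measurableSet_Ioi
    fun t ht ↦ congrArg (· * _) (hmul ht).symm)

lemma continuous_gaussFourier (hs : -1 < s) : Continuous (gaussFourier s) :=
  continuous_iff_continuousAt.2 fun x ↦ (hasDerivAt_gaussFourier hs x).continuousAt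

lemma I_mul_sq_mul_gaussFourier_add_two (hs : -1 < s) (x : ℝ) :
    (Complex.I * x) ^ 2 * gaussFourier (s + 2) x = gaussFourier (s + 4) x
      - (2 * s + 5) * gaussFourier (s + 2) x + (s + 1) * (s + 2) * gaussFourier s x := by
  have h₀ := gaussFourier_add_two hs x
  have h₁ := gaussFourier_add_two (s := s + 1) (by linarith) x
  have h₂ := gaussFourier_add_two (s := s + 2) (by linarith) x
  rw [show s + 1 + 2 = s + 3 by ring, show s + 1 + 1 = s + 2 by ring] at h₁
  rw [show s + 2 + 2 = s + 4 by ring, show s + 2 + 1 = s + 3 by ring] at h₂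
  push_cast at h₁ h₂
  linear_combination -h₂ - Complex.I * x * h₁ + (s + 2 : ℂ) * h₀

lemma sq_mul_norm_gaussFourier_add_two_le (hs : -1 < s) (x : ℝ) :
    x ^ 2 * ‖gaussFourier (s + 2) x‖ ≤ gaussMoment (s + 4) +
      (2 * s + 5) * gaussMoment (s + 2) + (s + 1) * (s + 2) * gaussMoment s := by
  calc x ^ 2 * ‖gaussFourier (s + 2) x‖ = ‖(Complex.I * x) ^ 2 * gaussFourier (s + 2) x‖ := by
        simp
    _ = ‖gaussFourier (s + 4) x - ((2 * s + 5 : ℝ) : ℂ) * gaussFourier (s + 2) x +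
        (((s + 1) * (s + 2) : ℝ) : ℂ) * gaussFourier s x‖ := by
        rw [I_mul_sq_mul_gaussFourier_add_two hs]
        push_cast
        rfl
    _ ≤ ‖gaussFourier (s + 4) x‖ + (2 * s + 5) * ‖gaussFourier (s + 2) x‖ +
        (s + 1) * (s + 2) * ‖gaussFourier s x‖ := by
        refine (norm_add_le _ _).trans (add_le_add ((norm_sub_le _ _).trans_eq ?_) (le_of_eq ?_))
        · rw [norm_mul, Complex.norm_of_nonneg (by linarith)]
        · rw [norm_mul, Complex.norm_of_nonneg (by nlinarith)]
    _ ≤ _ := by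
        gcongr
        · exact norm_gaussFourier_le (by linarith) x
        · linarith
        · exact norm_gaussFourier_le (by linarith) x
        · nlinarith
        · exact norm_gaussFourier_le hs x

lemma exists_rpow_mul_norm_gaussFourier_add_two_le (hs : -1 < s) :
    ∃ C, ∀ a ∈ Icc (0 : ℝ) 2, ∀ x ≥ 0, x ^ a * ‖gaussFourier (s + 2) x‖ ≤ C := by
  refine ⟨gaussMoment (s + 2) + (gaussMoment (s + 4) + (2 * s + 5) * gaussMoment (s + 2) +
    (s + 1) * (s + 2) * gaussMoment s), fun a ha x hx ↦ ?_⟩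
  calc x ^ a * ‖gaussFourier (s + 2) x‖ ≤ (1 + x ^ 2) * ‖gaussFourier (s + 2) x‖ := by
        gcongr
        exact rpow_le_one_add_sq ha hx
    _ = ‖gaussFourier (s + 2) x‖ + x ^ 2 * ‖gaussFourier (s + 2) x‖ := by rw [add_mul, one_mul]
    _ ≤ _ := add_le_add (norm_gaussFourier_le (by linarith) x)
        (sq_mul_norm_gaussFourier_add_two_le hs x)

end Transform

section Integrability

variable {p : ℝ}

lemma hasDerivAt_rpow_mul_gaussFourier (hp : -1 < p) {x : ℝ} (hx : 0 < x) :
    HasDerivAt (fun x : ℝ ↦ (x ^ (p + 1) : ℝ) * gaussFourier p x)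
      ((x ^ p : ℝ) * gaussFourier (p + 2) x) x := by
  refine ((hasDerivAt_rpow_const (.inl hx.ne')).ofReal_comp.mul
    (hasDerivAt_gaussFourier hp x)).congr_deriv ?_
  rw [gaussFourier_add_two hp, add_sub_cancel_right, rpow_add_one hx.ne']
  push_cast
  ring

lemma rpow_mul_gaussFourier_eq_integral (hp : -1 < p) {x : ℝ} (hx : 0 < x) :
    (x ^ (p + 1) : ℝ) * gaussFourier p x =
      ∫ v in (0)..x, ((v ^ p : ℝ) * gaussFourier (p + 2) v : ℂ) := by
  have hcont : Continuous fun v : ℝ ↦ ((v ^ (p + 1) : ℝ) * gaussFourier p v : ℂ) := by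
    have := continuous_rpow_const (q := p + 1) (by linarith)
    have := continuous_gaussFourier hp
    fun_prop
  have hint : IntervalIntegrable (fun v : ℝ ↦ ((v ^ p : ℝ) * gaussFourier (p + 2) v : ℂ))
      volume 0 x := by
    have hrpow := intervalIntegral.intervalIntegrable_rpow' hp (a := 0) (b := x)
    exact IntervalIntegrable.mul_continuousOn ⟨hrpow.1.ofReal, hrpow.2.ofReal⟩
      (continuous_gaussFourier (by linarith)).continuousOn
  rw [intervalIntegral.integral_eq_sub_of_hasDerivAt_of_le hx.le hcont.continuousOn
    (fun v hv ↦ hasDerivAt_rpow_mul_gaussFourier hp hv.1) hint, zero_rpow (by linarith),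
    Complex.ofReal_zero, zero_mul, sub_zero]

lemma norm_gaussFourier_le_mul_rpow (hp : -1 < p) {q C : ℝ} (hqp : q < p)
    (hC : ∀ v > 0, v ^ (1 + q) * ‖gaussFourier (p + 2) v‖ ≤ C) {x : ℝ} (hx : 0 < x) :
    ‖gaussFourier p x‖ ≤ C / (p - q) * x ^ (-(1 + q)) := by
  have hintegrand (v : ℝ) (hv : v ∈ Ioc 0 x) :
      ‖((v ^ p : ℝ) * gaussFourier (p + 2) v : ℂ)‖ ≤ C * v ^ (p - q - 1) := by
    rw [norm_mul, Complex.norm_of_nonneg (rpow_nonneg hv.1.le p)]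
    calc v ^ p * ‖gaussFourier (p + 2) v‖
        = v ^ (1 + q) * ‖gaussFourier (p + 2) v‖ * v ^ (p - q - 1) := by
          rw [mul_right_comm, ← rpow_add hv.1]
          ring_nf
      _ ≤ C * v ^ (p - q - 1) :=
          mul_le_mul_of_nonneg_right (hC v hv.1) (rpow_nonneg hv.1.le _)
  refine le_of_mul_le_mul_left ?_ (rpow_pos_of_pos hx (p + 1))
  calc x ^ (p + 1) * ‖gaussFourier p x‖
      = ‖∫ v in (0)..x, ((v ^ p : ℝ) * gaussFourier (p + 2) v : ℂ)‖ := by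
        rw [← rpow_mul_gaussFourier_eq_integral hp hx, norm_mul,
          Complex.norm_of_nonneg (rpow_nonneg hx.le _)]
    _ ≤ ∫ v in (0)..x, C * v ^ (p - q - 1) :=
        intervalIntegral.norm_integral_le_of_norm_le hx.le (.of_forall hintegrand)
          ((intervalIntegral.intervalIntegrable_rpow' (by linarith)).const_mul C)
    _ = C / (p - q) * x ^ (p - q) := by
        rw [intervalIntegral.integral_const_mul, integral_rpow (.inl (by linarith)),
          sub_add_cancel, zero_rpow (by linarith), sub_zero]
        ring
    _ = x ^ (p + 1) * (C / (p - q) * x ^ (-(1 + q))) := by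
        rw [mul_left_comm, ← rpow_add hx]
        ring_nf

lemma exists_gaussFourier_isBigO_rpow_atTop (hp : 0 < p) :
    ∃ q > (0 : ℝ), gaussFourier p =O[atTop] fun x : ℝ ↦ x ^ (-(1 + q)) := by
  obtain ⟨q, hq, hqp, hq1⟩ : ∃ q, 0 < q ∧ q < p ∧ q < 1 := by
    simpa only [lt_min_iff] using exists_between (lt_min hp one_pos)
  obtain ⟨C, hC⟩ := exists_rpow_mul_norm_gaussFourier_add_two_le (s := p) (by linarith)
  refine ⟨q, hq, .of_bound (C / (p - q)) ?_⟩
  filter_upwards [eventually_gt_atTop 0] with x hx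
  rw [norm_of_nonneg (rpow_nonneg hx.le _)]
  exact norm_gaussFourier_le_mul_rpow (by linarith) hqp
    (fun v hv ↦ hC _ ⟨by linarith, by linarith⟩ v hv.le) hx

lemma integrable_gaussFourier (hp : 0 < p) : Integrable (gaussFourier p) := by
  obtain ⟨q, hq, hO⟩ := exists_gaussFourier_isBigO_rpow_atTop hp
  refine (continuous_gaussFourier (by linarith)).locallyIntegrable
    |>.integrable_of_isBigO_atTop_of_norm_isNegInvariant (.of_forall fun x ↦ ?_) hO
      (integrableAtFilter_rpow_atTop_iff.2 (by linarith))
  simp [gaussFourier_neg]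

end Integrability

section Inversion

variable {p : ℝ}

lemma rpowGauss_max_zero_of_nonpos (hp : p ≠ 0) {t : ℝ} (ht : t ≤ 0) :
    rpowGauss p (max t 0) = 0 := by
  rw [max_eq_right ht, rpowGauss_zero_right hp]

lemma rpowGauss_max_zero_of_pos {t : ℝ} (ht : 0 < t) : rpowGauss p (max t 0) = rpowGauss p t := by
  rw [max_eq_left ht.le]

lemma gaussFourier_eq_integral_rpowGauss_max_zero (hp : p ≠ 0) (x : ℝ) :
    gaussFourier p x = ∫ t : ℝ, (rpowGauss p (max t 0) : ℂ) * Complex.exp (Complex.I * x * t) := by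
  have hzero (t : ℝ) (ht : t ∉ Ioi 0) :
      (rpowGauss p (max t 0) : ℂ) * Complex.exp (Complex.I * x * t) = 0 := by
    rw [rpowGauss_max_zero_of_nonpos hp (notMem_Ioi.1 ht), Complex.ofReal_zero, zero_mul]
  rw [gaussFourier, ← setIntegral_eq_integral_of_forall_compl_eq_zero hzero]
  exact setIntegral_congr_fun measurableSet_Ioi fun t ht ↦ by
    simp only [rpowGauss_max_zero_of_pos (mem_Ioi.1 ht)]

lemma integrable_rpowGauss_max_zero (hp : 0 < p) : Integrable fun t ↦ rpowGauss p (max t 0) := by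
  refine (integrableOn_iff_integrable_of_support_subset fun t ht ↦ ?_).1
    ((integrableOn_rpowGauss (by linarith)).congr_fun
      (fun t ht ↦ (rpowGauss_max_zero_of_pos ht).symm) measurableSet_Ioi)
  contrapose! ht
  exact Function.notMem_support.2 (rpowGauss_max_zero_of_nonpos hp.ne' (notMem_Ioi.1 ht))

lemma integral_gaussFourier_mul_exp_neg_I (hp : 0 < p) (ω : ℝ) :
    ∫ x : ℝ, gaussFourier p x * Complex.exp (-(Complex.I * ω * x)) =
      2 * π * rpowGauss p (max ω 0) := by
  have hcont : Continuous fun t : ℝ ↦ (rpowGauss p (max t 0) : ℂ) := by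
    have := continuous_rpowGauss hp.le
    fun_prop
  have hint := integrable_gaussFourier hp
  rw [funext (gaussFourier_eq_integral_rpowGauss_max_zero hp.ne')] at hint ⊢
  exact integral_integral_mul_exp_I_mul_exp_neg_I hcont (integrable_rpowGauss_max_zero hp).ofReal
    hint ω

lemma integral_conj_gaussFourier_mul_exp_neg_I (hp : 0 < p) (ω : ℝ) :
    ∫ x : ℝ, conj (gaussFourier p x) * Complex.exp (-(Complex.I * ω * x)) =
      2 * π * rpowGauss p (max (-ω) 0) := by
  rw [← integral_gaussFourier_mul_exp_neg_I hp, ← integral_neg_eq_self]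
  simp [← gaussFourier_neg]

lemma rpowGauss_max_zero_add_neg (hp : p ≠ 0) (ω : ℝ) :
    rpowGauss p (max ω 0) + rpowGauss p (max (-ω) 0) = rpowGauss p |ω| := by
  rcases le_total ω 0 with hω | hω
  · simp [hω, abs_of_nonpos hω, rpowGauss_zero_right hp]
  · simp [hω, abs_of_nonneg hω, rpowGauss_zero_right hp]

lemma rpowGauss_max_zero_sub_neg (hp : p ≠ 0) (ω : ℝ) :
    rpowGauss p (max ω 0) - rpowGauss p (max (-ω) 0) = Real.sign ω * rpowGauss p |ω| := by
  rcases lt_trichotomy ω 0 with hω | rfl | hω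
  · simp [hω.le, abs_of_neg hω, Real.sign_of_neg hω, rpowGauss_zero_right hp]
  · simp
  · simp [hω.le, abs_of_pos hω, Real.sign_of_pos hω, rpowGauss_zero_right hp]

lemma integrable_gaussFourier_mul_exp_neg_I (hp : 0 < p) (ω : ℝ) :
    Integrable fun x : ℝ ↦ gaussFourier p x * Complex.exp (-(Complex.I * ω * x)) := by
  simpa using integrable_mul_exp_I (integrable_gaussFourier hp) (-ω)

lemma integrable_conj_gaussFourier_mul_exp_neg_I (hp : 0 < p) (ω : ℝ) :
    Integrable fun x : ℝ ↦ conj (gaussFourier p x) * Complex.exp (-(Complex.I * ω * x)) := by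
  simpa [gaussFourier_neg] using (integrable_gaussFourier_mul_exp_neg_I hp (-ω)).comp_neg

lemma integral_re_gaussFourier_mul_exp_neg_I (hp : 0 < p) (ω : ℝ) :
    ∫ x : ℝ, ((gaussFourier p x).re : ℂ) * Complex.exp (-(Complex.I * ω * x)) =
      π * rpowGauss p |ω| := by
  simp_rw [Complex.re_eq_add_conj, div_mul_eq_mul_div, add_mul]
  rw [integral_div, integral_add (integrable_gaussFourier_mul_exp_neg_I hp ω)
    (integrable_conj_gaussFourier_mul_exp_neg_I hp ω), integral_gaussFourier_mul_exp_neg_I hp,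
    integral_conj_gaussFourier_mul_exp_neg_I hp, ← rpowGauss_max_zero_add_neg hp.ne']
  push_cast
  ring

lemma integral_im_gaussFourier_mul_exp_neg_I (hp : 0 < p) (ω : ℝ) :
    ∫ x : ℝ, ((gaussFourier p x).im : ℂ) * Complex.exp (-(Complex.I * ω * x)) =
      -Complex.I * π * (Real.sign ω * rpowGauss p |ω|) := by
  simp_rw [Complex.im_eq_sub_conj, div_mul_eq_mul_div, sub_mul]
  rw [integral_div, integral_sub (integrable_gaussFourier_mul_exp_neg_I hp ω)
    (integrable_conj_gaussFourier_mul_exp_neg_I hp ω), integral_gaussFourier_mul_exp_neg_I hp,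
    integral_conj_gaussFourier_mul_exp_neg_I hp, ← Complex.ofReal_mul (Real.sign ω),
    ← rpowGauss_max_zero_sub_neg hp.ne']
  push_cast
  field_simp
  rw [Complex.I_sq]
  ring

end Inversion

section Kernels

variable {p : ℝ}

lemma hasSum_gaussFourier (hp : -1 < p) (x : ℝ) :
    HasSum (fun n : ℕ ↦ (Complex.I * x) ^ n * (gaussMoment (p + n) / n.factorial : ℝ))
      (gaussFourier p x) := by
  have hint : IntegrableOn (fun t ↦ ‖(rpowGauss p t : ℂ)‖ * exp |x * t|) (Ioi 0) :=
    (integrableOn_rpowGauss_mul_exp_abs hp x).congr_fun (fun t ht ↦ by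
      simp only [Complex.norm_of_nonneg (rpowGauss_pos ht).le]) measurableSet_Ioi
  have hmeas : Measurable fun t ↦ (rpowGauss p t : ℂ) :=
    Complex.measurable_ofReal.comp measurable_rpowGauss
  refine (hasSum_integral_mul_pow_div_factorial hmeas.aestronglyMeasurable hint).congr_fun
    fun n ↦ ?_
  rw [gaussMoment, Complex.ofReal_div, ← integral_complex_ofReal, Complex.ofReal_natCast,
    ← mul_div_assoc, mul_div_right_comm, ← integral_const_mul]
  refine setIntegral_congr_fun measurableSet_Ioi fun t ht ↦ ?_
  simp only [rpowGauss_add_natCast (mem_Ioi.1 ht)]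
  push_cast
  ring

lemma LamE_eq_re_gaussFourier (hp : -1 < p) (x : ℝ) :
    LamE p x = 1 / √(2 * π) * ((gaussFourier p x).re / gaussMoment p) := by
  refine congrArg _ (((hasSum_re_of_I_mul_pow (hasSum_gaussFourier hp x)).div_const
    (gaussMoment p)).congr_fun fun n ↦ ?_).tsum_eq
  rw [gaussMoment_add_two_mul hp]
  have := (gaussMoment_pos hp).ne'
  field_simp

lemma LamO_eq_im_gaussFourier (hp : -1 < p) (x : ℝ) :
    LamO p x = 1 / √(2 * π) * ((gaussFourier p x).im / gaussMoment (p + 1)) := by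
  have hp1 : -1 < p + 1 := by linarith
  refine congrArg _ (((hasSum_im_of_I_mul_pow (hasSum_gaussFourier hp x)).div_const
    (gaussMoment (p + 1))).congr_fun fun n ↦ ?_).tsum_eq
  rw [show p + (2 * n + 1 : ℕ) = p + 1 + (2 * n : ℕ) by push_cast; ring,
    gaussMoment_add_two_mul hp1]
  have := (gaussMoment_pos hp1).ne'
  have hprod : ∏ k ∈ Finset.range n, (p + 2 * ((k : ℝ) + 1)) =
      ∏ k ∈ Finset.range n, (p + 1 + 2 * (k : ℝ) + 1) :=
    Finset.prod_congr rfl fun k _ ↦ by ring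
  rw [hprod]
  field_simp

lemma integral_LamE_mul_exp_neg_I (hp : 0 < p) (ω : ℝ) :
    ∫ x : ℝ, (LamE p x : ℂ) * Complex.exp (-(Complex.I * ω * x)) =
      (π / (√(2 * π) * gaussMoment p) : ℝ) * rpowGauss p |ω| := by
  have hLamE (x : ℝ) : (LamE p x : ℂ) * Complex.exp (-(Complex.I * ω * x)) =
      (1 / (√(2 * π) * gaussMoment p) : ℝ) *
        ((gaussFourier p x).re * Complex.exp (-(Complex.I * ω * x))) := by
    rw [LamE_eq_re_gaussFourier (by linarith)]
    push_cast
    ring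
  simp_rw [hLamE]
  rw [integral_const_mul, integral_re_gaussFourier_mul_exp_neg_I hp]
  push_cast
  ring

lemma integral_LamO_mul_exp_neg_I (hp : 0 < p) (ω : ℝ) :
    ∫ x : ℝ, (LamO p x : ℂ) * Complex.exp (-(Complex.I * ω * x)) =
      Complex.I * (-π / (√(2 * π) * gaussMoment (p + 1)) : ℝ) *
        (Real.sign ω * rpowGauss p |ω|) := by
  have hLamO (x : ℝ) : (LamO p x : ℂ) * Complex.exp (-(Complex.I * ω * x)) =
      (1 / (√(2 * π) * gaussMoment (p + 1)) : ℝ) *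
        ((gaussFourier p x).im * Complex.exp (-(Complex.I * ω * x))) := by
    rw [LamO_eq_im_gaussFourier (by linarith)]
    push_cast
    ring
  simp_rw [hLamO]
  rw [integral_const_mul, integral_im_gaussFourier_mul_exp_neg_I hp]
  push_cast
  ring

lemma prod_range_two_mul_add_one_mul (n : ℕ) :
    (∏ k ∈ Finset.range n, (2 * (k : ℝ) + 1)) * (2 ^ n * n.factorial) = (2 * n).factorial := by
  induction n with
  | zero => simp
  | succ n ih =>
    rw [Finset.prod_range_succ, show 2 * (n + 1) = 2 * n + 1 + 1 by ring, Nat.factorial_succ,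
      Nat.factorial_succ, Nat.factorial_succ]
    push_cast
    rw [← ih]
    ring

open ProbabilityTheory in
lemma LamE_zero_eq_gaussianPDFReal (x : ℝ) : LamE 0 x = gaussianPDFReal 0 1 x := by
  have hexp : HasSum (fun n : ℕ ↦ (-x ^ 2 / 2) ^ n / n.factorial) (exp (-x ^ 2 / 2)) := by
    rw [exp_eq_exp_ℝ]
    exact NormedSpace.expSeries_div_hasSum_exp _
  have hLamE : LamE 0 x = 1 / √(2 * π) * exp (-x ^ 2 / 2) := by
    refine congrArg _ (hexp.congr_fun fun n ↦ ?_).tsum_eq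
    have hprod : ∏ k ∈ Finset.range n, (0 + 2 * (k : ℝ) + 1) ≠ 0 :=
      Finset.prod_ne_zero_iff.2 fun k _ ↦ by positivity
    simp only [zero_add] at hprod ⊢
    rw [← prod_range_two_mul_add_one_mul, div_pow, neg_pow (x ^ 2), ← pow_mul]
    field_simp
  simp [hLamE, gaussianPDFReal]

open ProbabilityTheory in
lemma integral_LamE_zero_mul_exp_neg_I (ω : ℝ) :
    ∫ x : ℝ, (LamE 0 x : ℂ) * Complex.exp (-(Complex.I * ω * x)) = (exp (-ω ^ 2 / 2) : ℝ) := by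
  have hcharFun := charFun_gaussianReal (μ := 0) (v := 1) (-ω)
  rw [charFun_apply_real, integral_gaussianReal_eq_integral_smul one_ne_zero] at hcharFun
  calc ∫ x : ℝ, (LamE 0 x : ℂ) * Complex.exp (-(Complex.I * ω * x))
      = ∫ x : ℝ, gaussianPDFReal 0 1 x • Complex.exp ((-ω : ℝ) * x * Complex.I) := by
        refine integral_congr_ae (.of_forall fun x ↦ ?_)
        simp only [LamE_zero_eq_gaussianPDFReal, Complex.real_smul]
        push_cast
        ring_nf
    _ = (exp (-ω ^ 2 / 2) : ℝ) := by
        rw [hcharFun]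
        push_cast
        ring_nf

end Kernels

/-- Fourier transforms of the kernels: for `p > 0` there are nonzero real constants `c, d` with
`𝓕(Λ^e_p)(ω) = c |ω|^p e^{-ω²/2}` and `𝓕(Λ^o_p)(ω) = i d sign(ω) |ω|^p e^{-ω²/2}`;
moreover `𝓕(Λ^e_0)(ω) = e^{-ω²/2}`. -/
theorem stmt_8 :
    (∀ p : ℝ, 0 < p →
      ∃ c : ℝ, c ≠ 0 ∧ ∃ d : ℝ, d ≠ 0 ∧ ∀ ω : ℝ,
        (∫ x : ℝ, (LamE p x : ℂ) * Complex.exp (-(Complex.I * ω * x))) =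
          (c : ℂ) * ((|ω| ^ p : ℝ) : ℂ) * ((Real.exp (-ω ^ 2 / 2) : ℝ) : ℂ) ∧
        (∫ x : ℝ, (LamO p x : ℂ) * Complex.exp (-(Complex.I * ω * x))) =
          Complex.I * (d : ℂ) * ((Real.sign ω : ℝ) : ℂ) * ((|ω| ^ p : ℝ) : ℂ) *
            ((Real.exp (-ω ^ 2 / 2) : ℝ) : ℂ)) ∧
    (∀ ω : ℝ,
      (∫ x : ℝ, (LamE 0 x : ℂ) * Complex.exp (-(Complex.I * ω * x))) =
        ((Real.exp (-ω ^ 2 / 2) : ℝ) : ℂ)) := by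
  refine ⟨fun p hp ↦ ?_, integral_LamE_zero_mul_exp_neg_I⟩
  have hM₀ : gaussMoment p ≠ 0 := (gaussMoment_pos (by linarith)).ne'
  have hM₁ : gaussMoment (p + 1) ≠ 0 := (gaussMoment_pos (by linarith)).ne'
  refine ⟨π / (√(2 * π) * gaussMoment p), by positivity,
    -π / (√(2 * π) * gaussMoment (p + 1)), div_ne_zero (neg_ne_zero.2 pi_ne_zero) (by positivity),
    fun ω ↦ ⟨?_, ?_⟩⟩
  · rw [integral_LamE_mul_exp_neg_I hp, rpowGauss_abs]
    push_cast
    ring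
  · rw [integral_LamO_mul_exp_neg_I hp, rpowGauss_abs]
    push_cast
    ring
end
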